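/- Under the zero-loss hypothesis, the inclusion map TP ↪ F_ε(P) ∪ F_{2ε}(G) of the intersection of the thickened foregrounds into their union is a homotopy equivalence (of topological spaces with the subspace topology from ℝ²). -/

import Mathlib

open Set Metric

noncomputable section

/-- The plane modeled as `Fin 2 → ℝ` with the Pi (sup) norm. -/
abbrev Plane : Type := Fin 2 → ℝ

/-- The Euclidean plane (for Euclidean-norm disks and annuli). -/
abbrev EPlane : Type := EuclideanSpace ℝ (Fin 2)

/-- The closed unit pixel `[i-1,i] × [j-1,j]` for a pixel index `(i,j)`. -/
def pixel (p : ℕ × ℕ) : Set Plane :=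
  {x | x 0 ∈ Set.Icc ((p.1 : ℝ) - 1) (p.1 : ℝ) ∧ x 1 ∈ Set.Icc ((p.2 : ℝ) - 1) (p.2 : ℝ)}

/-- A binary image `S` lies on the `h × w` grid `{1,…,h} × {1,…,w}`. -/
def OnGrid (S : Set (ℕ × ℕ)) (h w : ℕ) : Prop :=
  S ⊆ Set.Icc 1 h ×ˢ Set.Icc 1 w

/-- The foreground `F(S)` of a binary image. -/
def fg (S : Set (ℕ × ℕ)) : Set Plane := ⋃ p ∈ S, pixel p

/-- Closed `ε`-thickening `D_ε(X)` with respect to the sup norm. -/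
def thick (ε : ℝ) (X : Set Plane) : Set Plane := {y | ∃ x ∈ X, ‖x - y‖ ≤ ε}

/-- `C` is a connected component of `A` (as a subset of the plane). -/
def IsCompOf (C A : Set Plane) : Prop := ∃ x ∈ A, C = connectedComponentIn A x

/-- Two subsets share a boundary edge if their closures intersect in an infinite set. -/
def SharesEdge (C D : Set Plane) : Prop := (closure C ∩ closure D).Infinite

/-- `X` strongly deformation retracts onto `A`. -/
def SDR (X A : Set Plane) : Prop :=
  ∃ H : C(↥X × unitInterval, ↥X),
    (∀ x, H (x, 0) = x) ∧ (∀ x, ((H (x, 1) : Plane)) ∈ A) ∧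
    (∀ a : ↥X, (a : Plane) ∈ A → ∀ t, H (a, t) = a)

def TPset (P G : Set (ℕ × ℕ)) (ε : ℝ) : Set Plane := thick ε (fg P) ∩ thick (2 * ε) (fg G)
def TNset (P G : Set (ℕ × ℕ)) (ε : ℝ) : Set Plane := (thick ε (fg P))ᶜ ∩ (thick (2 * ε) (fg G))ᶜ
def FPset (P G : Set (ℕ × ℕ)) (ε : ℝ) : Set Plane := thick ε (fg P) ∩ (thick (2 * ε) (fg G))ᶜ
def FNset (P G : Set (ℕ × ℕ)) (ε : ℝ) : Set Plane := (thick ε (fg P))ᶜ ∩ thick (2 * ε) (fg G)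

/-- A component `C` (of `FP` or `FN`) is regular: exactly one component of `TP` and exactly
one component of `TN` share a boundary edge with it. -/
def RegularComp (P G : Set (ℕ × ℕ)) (ε : ℝ) (C : Set Plane) : Prop :=
  (∃! T : Set Plane, IsCompOf T (TPset P G ε) ∧ SharesEdge T C) ∧
  (∃! T : Set Plane, IsCompOf T (TNset P G ε) ∧ SharesEdge T C)

/-- The zero-loss hypothesis: every component of `FP` and every component of `FN` is regular. -/
def ZeroLoss (P G : Set (ℕ × ℕ)) (ε : ℝ) : Prop :=
  (∀ C : Set Plane, IsCompOf C (FPset P G ε) → RegularComp P G ε C) ∧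
  (∀ C : Set Plane, IsCompOf C (FNset P G ε) → RegularComp P G ε C)

/-!
Put `δ = 2 * ε`. The lines through the nodes `q ± ε` and `q ± δ`, `q` an integer, cut the plane into
the cells of a grid for which both thickenings are finite unions of closed faces. As `ε ≠ δ`, the
frontiers of the two thickenings `A` and `B` never run along the same line, so they only meet at
vertices. Regularity of the components of `A \ B` and `B \ A` then makes the mod 2 homology of
`A ∪ B` relative to `A ∩ B` vanish: a relative 1-cycle in a component of `A \ B` has its boundary in
a single component of `A ∩ B`, so it can be closed up there, and the closed cycle bounds a 2-chain
which is constant, hence can be taken to be zero, on the single component of the complement that the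
component touches.

A nonempty finite acyclic set of cells of the plane contains a free pair, by parity when there are
2-cells and by counting edges against vertices otherwise. Removing a free pair is a deformation
retraction, radially from a point just outside the free face, and `A ∪ B` is collapsed onto `A ∩ B`
one pair at a time.
-/

section Linked

variable {α β : Type*} [Preorder α] {S S' : Set α} {a b c : α}

/-- A chain of successively comparable elements of `S` leads from `a` to `b`. For cells of a grid
this encodes lying in the same connected component. -/
def Linked (S : Set α) : α → α → Prop := Relation.EqvGen fun a b => a ∈ S ∧ b ∈ S ∧ a ≤ b

namespace Linked

theorem refl (S : Set α) (a : α) : Linked S a a := Relation.EqvGen.refl a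

theorem symm (h : Linked S a b) : Linked S b a := Relation.EqvGen.symm _ _ h

theorem trans (h : Linked S a b) (h' : Linked S b c) : Linked S a c :=
  Relation.EqvGen.trans _ _ _ h h'

theorem of_le (ha : a ∈ S) (hb : b ∈ S) (hab : a ≤ b) : Linked S a b :=
  Relation.EqvGen.rel _ _ ⟨ha, hb, hab⟩

theorem mono (hS : S ⊆ S') (h : Linked S a b) : Linked S' a b :=
  Relation.EqvGen.mono (fun _ _ ⟨ha, hb, hab⟩ => ⟨hS ha, hS hb, hab⟩) _ _ h

theorem eq_of_forall_le {φ : α → β} (hφ : ∀ a ∈ S, ∀ b ∈ S, a ≤ b → φ a = φ b)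
    (h : Linked S a b) : φ a = φ b := by
  induction h with
  | rel a b hab => exact hφ a hab.1 b hab.2.1 hab.2.2
  | refl a => rfl
  | symm a b _ ih => exact ih.symm
  | trans a b c _ _ ih ih' => exact ih.trans ih'

theorem mem_iff (h : Linked S a b) : a ∈ S ↔ b ∈ S :=
  iff_of_eq <| h.eq_of_forall_le (φ := (· ∈ S)) fun _ ha _ hb _ => propext (iff_of_true ha hb)

end Linked

/-- The elements of `S` linked to `a` in `S`. -/
def linkedClass (S : Set α) (a : α) : Set α := {b ∈ S | Linked S a b}

theorem mem_linkedClass_of_le (hb : b ∈ linkedClass S a) (hc : c ∈ S) (hbc : b ≤ c) :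
    c ∈ linkedClass S a :=
  ⟨hc, hb.2.trans (.of_le hb.1 hc hbc)⟩

theorem mem_linkedClass_of_ge (hb : b ∈ linkedClass S a) (hc : c ∈ S) (hcb : c ≤ b) :
    c ∈ linkedClass S a :=
  ⟨hc, hb.2.trans (Linked.of_le hc hb.1 hcb).symm⟩

theorem linked_of_mem_linkedClass (hb : b ∈ linkedClass S a) (hc : c ∈ linkedClass S a) :
    Linked S b c :=
  hb.2.symm.trans hc.2

end Linked

/-- `IsFace a b`: on the line cut at the even integers, `a` is `b` or an endpoint of the open
interval `b`. Even integers stand for points, odd ones for the open intervals between them. -/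
def IsFace (a b : ℤ) : Prop := a = b ∨ a % 2 = 0 ∧ (b = a + 1 ∨ b = a - 1)

/-- A cell of a rectangular grid: in each direction an even coordinate `2 * i` stands for the
`i`-th node, an odd coordinate `2 * i + 1` for the open interval between the nodes `i` and `i + 1`.
Cells are ordered by the face relation. -/
@[ext]
structure Cell (ι : Type*) where
  coord : ι → ℤ

namespace Cell

section Boundary

variable {ι : Type*}

instance : CoeFun (Cell ι) fun _ => ι → ℤ := ⟨coord⟩

theorem coord_injective : Function.Injective (coord : Cell ι → ι → ℤ) := fun _ _ => Cell.ext

instance : PartialOrder (Cell ι) where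
  le c d := ∀ i, IsFace (c i) (d i)
  le_refl _ _ := Or.inl rfl
  le_trans c d f hcd hdf i := by
    have := hcd i
    have := hdf i
    simp only [IsFace] at *
    omega
  le_antisymm c d hcd hdc := Cell.ext <| funext fun i => by
    have := hcd i
    have := hdc i
    simp only [IsFace] at *
    omega

theorem le_def {c d : Cell ι} : c ≤ d ↔ ∀ i, IsFace (c i) (d i) := Iff.rfl

theorem finite_setOf_le [Finite ι] (c : Cell ι) : {d | d ≤ c}.Finite := by
  refine ((Set.Finite.pi' fun i => Set.finite_Icc (c i - 1) (c i + 1)).preimage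
    coord_injective.injOn).subset fun d hd i => Set.mem_Icc.2 ?_
  have := le_def.1 hd i
  simp only [IsFace] at this
  omega

theorem finite_setOf_ge [Finite ι] (c : Cell ι) : {d | c ≤ d}.Finite := by
  refine ((Set.Finite.pi' fun i => Set.finite_Icc (c i - 1) (c i + 1)).preimage
    coord_injective.injOn).subset fun d hd i => Set.mem_Icc.2 ?_
  have := le_def.1 hd i
  simp only [IsFace] at this
  omega

variable [Fintype ι]

/-- The dimension of a cell: its number of odd coordinates. -/
def dim (c : Cell ι) : ℤ := ∑ i, c i % 2

theorem dim_nonneg (c : Cell ι) : 0 ≤ dim c :=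
  Finset.sum_nonneg fun _ _ => Int.emod_nonneg _ two_ne_zero

theorem dim_strictMono : StrictMono (dim : Cell ι → ℤ) := fun c d hcd => by
  have hle (i : ι) : c i % 2 ≤ d i % 2 := by
    have := le_def.1 hcd.le i
    simp only [IsFace] at this
    omega
  obtain ⟨i, hi⟩ : ∃ i, c i ≠ d i := by
    by_contra! heq
    exact hcd.ne (Cell.ext (funext heq))
  refine Finset.sum_lt_sum (fun i _ => hle i) ⟨i, Finset.mem_univ i, ?_⟩
  have := le_def.1 hcd.le i
  simp only [IsFace] at this
  omega

/-- The cells of dimension one more that have `c` as a face. -/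
def cofacets (c : Cell ι) : Finset (Cell ι) :=
  ((finite_setOf_ge c).inter_of_left {d | dim d = dim c + 1}).toFinset

theorem mem_cofacets {c d : Cell ι} : d ∈ cofacets c ↔ c ≤ d ∧ dim d = dim c + 1 :=
  Set.Finite.mem_toFinset _

/-- The faces of `d` of dimension one less. -/
def facets (d : Cell ι) : Finset (Cell ι) :=
  ((finite_setOf_le d).inter_of_left {c | dim d = dim c + 1}).toFinset

theorem mem_facets {c d : Cell ι} : c ∈ facets d ↔ d ∈ cofacets c :=
  ((finite_setOf_le d).inter_of_left {c | dim d = dim c + 1}).mem_toFinset.trans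
    mem_cofacets.symm

theorem le_of_mem_cofacets {c d : Cell ι} (h : d ∈ cofacets c) : c ≤ d := (mem_cofacets.1 h).1

theorem ne_of_mem_cofacets {c d : Cell ι} (h : d ∈ cofacets c) : d ≠ c := by
  rintro rfl
  have := (mem_cofacets.1 h).2
  omega

/-- The cellular boundary map mod 2. A chain assigns coefficients to the cells of all
dimensions at once. -/
def boundary : (Cell ι → ZMod 2) →ₗ[ZMod 2] Cell ι → ZMod 2 where
  toFun z c := ∑ d ∈ cofacets c, z d
  map_add' _ _ := funext fun _ => Finset.sum_add_distrib
  map_smul' _ _ := funext fun _ => (Finset.mul_sum ..).symm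

theorem boundary_apply (z : Cell ι → ZMod 2) (c : Cell ι) :
    boundary z c = ∑ d ∈ cofacets c, z d := rfl

theorem boundary_congr {y z : Cell ι → ZMod 2} {c : Cell ι} (h : ∀ d ∈ cofacets c, y d = z d) :
    boundary y c = boundary z c :=
  Finset.sum_congr rfl h

open scoped Classical in
theorem boundary_single (d c : Cell ι) :
    boundary (Pi.single d 1) c = if d ∈ cofacets c then 1 else 0 := by
  simp only [boundary_apply, Pi.single_apply, Finset.sum_ite_eq']

theorem reflect_mem_cofacets {c d f : Cell ι} (hd : d ∈ cofacets c) (hf : f ∈ cofacets d) :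
    ⟨fun i => c i + f i - d i⟩ ∈ cofacets c ∧ f ∈ cofacets ⟨fun i => c i + f i - d i⟩ := by
  rw [mem_cofacets] at hd hf
  have hcdf : ∀ i, IsFace (c i) (d i) ∧ IsFace (d i) (f i) := fun i => ⟨hd.1 i, hf.1 i⟩
  have hdim : dim ⟨fun i => c i + f i - d i⟩ = dim c + dim f - dim d := by
    simp only [dim, ← Finset.sum_add_distrib, ← Finset.sum_sub_distrib]
    refine Finset.sum_congr rfl fun i _ => ?_
    have := hcdf i
    simp only [IsFace] at this
    omega
  simp only [mem_cofacets]
  refine ⟨⟨fun i => ?_, by omega⟩, fun i => ?_, by omega⟩ <;>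
  · have := hcdf i
    simp only [IsFace] at this ⊢
    omega

theorem boundary_boundary (z : Cell ι → ZMod 2) : boundary (boundary z) = 0 := by
  funext c
  simp only [boundary_apply, Finset.sum_sigma', Pi.zero_apply]
  -- The cells between `c` and a cell `f` are paired by the reflection `d ↦ c + f - d`.
  refine Finset.sum_involution (fun p _ => ⟨⟨fun i => c i + p.2 i - p.1 i⟩, p.2⟩)
    (fun p _ => CharTwo.add_self_eq_zero _) (fun p hp _ h => ?_) (fun p hp => ?_) fun p _ => ?_
  · obtain ⟨hd, hf⟩ := Finset.mem_sigma.1 hp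
    refine ne_of_mem_cofacets hd (Cell.ext <| funext fun i => ?_)
    have hi : c i + p.2 i - p.1 i = p.1 i := congrFun (congrArg (·.fst.coord) h) i
    have h₁ := le_of_mem_cofacets hd i
    have h₂ := le_of_mem_cofacets hf i
    simp only [IsFace] at h₁ h₂
    omega
  · obtain ⟨hd, hf⟩ := Finset.mem_sigma.1 hp
    exact Finset.mem_sigma.2 (reflect_mem_cofacets hd hf)
  · simp only [sub_sub_cancel]

/-- The transpose of `boundary`. -/
def coboundary (φ : Cell ι → ZMod 2) (d : Cell ι) : ZMod 2 := ∑ c ∈ facets d, φ c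

theorem sum_coboundary_mul {z : Cell ι → ZMod 2} {s t : Finset (Cell ι)}
    (hs : Function.support z ⊆ s) (ht : Function.support (boundary z) ⊆ t)
    (φ : Cell ι → ZMod 2) :
    ∑ d ∈ s, coboundary φ d * z d = ∑ c ∈ t, φ c * boundary z c := by
  classical
  set t' := t ∪ s.biUnion facets
  have hcoboundary (d : Cell ι) (hd : d ∈ s) :
      coboundary φ d * z d = ∑ c ∈ t' with d ∈ cofacets c, φ c * z d := by
    rw [coboundary, Finset.sum_mul]
    refine Finset.sum_congr (Finset.ext fun c => ?_) fun _ _ => rfl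
    rw [mem_facets, Finset.mem_filter, iff_and_self]
    exact fun hc => Finset.mem_union_right _ (Finset.mem_biUnion.2 ⟨d, hd, mem_facets.2 hc⟩)
  have hboundary (c : Cell ι) : φ c * boundary z c = ∑ d ∈ s with d ∈ cofacets c, φ c * z d := by
    rw [boundary_apply, Finset.mul_sum, Finset.filter_mem_eq_inter, Finset.inter_comm]
    refine (Finset.sum_subset Finset.inter_subset_left fun d hd hds => ?_).symm
    have : d ∉ Function.support z := fun h => hds (Finset.mem_inter.2 ⟨hd, hs h⟩)
    rw [Function.notMem_support.1 this, mul_zero]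
  calc ∑ d ∈ s, coboundary φ d * z d
      = ∑ d ∈ s, ∑ c ∈ t' with d ∈ cofacets c, φ c * z d := Finset.sum_congr rfl hcoboundary
    _ = ∑ c ∈ t', ∑ d ∈ s with d ∈ cofacets c, φ c * z d :=
        Finset.sum_comm' fun d c => by simp only [Finset.mem_filter]; tauto
    _ = ∑ c ∈ t', φ c * boundary z c := Finset.sum_congr rfl fun c _ => (hboundary c).symm
    _ = ∑ c ∈ t, φ c * boundary z c :=
        (Finset.sum_subset Finset.subset_union_left fun c _ hc => by
          rw [Function.notMem_support.1 fun h => hc (ht h), mul_zero]).symm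

end Boundary

section Plane

theorem ext_two {c d : Cell (Fin 2)} : c = d ↔ c 0 = d 0 ∧ c 1 = d 1 := by
  rw [Cell.ext_iff, funext_iff, Fin.forall_fin_two]

theorem le_two {c d : Cell (Fin 2)} : c ≤ d ↔ IsFace (c 0) (d 0) ∧ IsFace (c 1) (d 1) := by
  rw [le_def, Fin.forall_fin_two]

theorem dim_two (c : Cell (Fin 2)) : dim c = c 0 % 2 + c 1 % 2 := Fin.sum_univ_two _

theorem dim_two_cases (c : Cell (Fin 2)) : dim c = 0 ∨ dim c = 1 ∨ dim c = 2 := by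
  rw [dim_two]
  omega

open scoped Classical in
theorem cofacets_of_horizontal {e : Cell (Fin 2)} (h₀ : e 0 % 2 = 1) (h₁ : e 1 % 2 = 0) :
    cofacets e = {⟨![e 0, e 1 - 1]⟩, ⟨![e 0, e 1 + 1]⟩} := by
  ext d
  simp only [mem_cofacets, le_two, dim_two, IsFace, Finset.mem_insert,
    Finset.mem_singleton, ext_two, Matrix.cons_val_zero, Matrix.cons_val_one]
  omega

open scoped Classical in
theorem cofacets_of_vertical {e : Cell (Fin 2)} (h₀ : e 0 % 2 = 0) (h₁ : e 1 % 2 = 1) :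
    cofacets e = {⟨![e 0 - 1, e 1]⟩, ⟨![e 0 + 1, e 1]⟩} := by
  ext d
  simp only [mem_cofacets, le_two, dim_two, IsFace, Finset.mem_insert,
    Finset.mem_singleton, ext_two, Matrix.cons_val_zero, Matrix.cons_val_one]
  omega

open scoped Classical in
theorem facets_of_horizontal {e : Cell (Fin 2)} (h₀ : e 0 % 2 = 1) (h₁ : e 1 % 2 = 0) :
    facets e = {⟨![e 0 - 1, e 1]⟩, ⟨![e 0 + 1, e 1]⟩} := by
  ext d
  simp only [mem_facets, mem_cofacets, le_two, dim_two, IsFace, Finset.mem_insert,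
    Finset.mem_singleton, ext_two, Matrix.cons_val_zero, Matrix.cons_val_one]
  omega

open scoped Classical in
theorem facets_of_vertical {e : Cell (Fin 2)} (h₀ : e 0 % 2 = 0) (h₁ : e 1 % 2 = 1) :
    facets e = {⟨![e 0, e 1 - 1]⟩, ⟨![e 0, e 1 + 1]⟩} := by
  ext d
  simp only [mem_facets, mem_cofacets, le_two, dim_two, IsFace, Finset.mem_insert,
    Finset.mem_singleton, ext_two, Matrix.cons_val_zero, Matrix.cons_val_one]
  omega

theorem horizontal_or_vertical {e : Cell (Fin 2)} (he : dim e = 1) :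
    e 0 % 2 = 1 ∧ e 1 % 2 = 0 ∨ e 0 % 2 = 0 ∧ e 1 % 2 = 1 := by
  rw [dim_two] at he
  omega

open scoped Classical in
theorem exists_cofacets_eq_pair {e : Cell (Fin 2)} (he : dim e = 1) :
    ∃ f g, f ≠ g ∧ cofacets e = {f, g} := by
  obtain ⟨h₀, h₁⟩ | ⟨h₀, h₁⟩ := horizontal_or_vertical he
  · refine ⟨_, _, fun h => ?_, cofacets_of_horizontal h₀ h₁⟩
    have : e 1 - 1 = e 1 + 1 := congrFun (congrArg coord h) 1
    omega
  · refine ⟨_, _, fun h => ?_, cofacets_of_vertical h₀ h₁⟩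
    have : e 0 - 1 = e 0 + 1 := congrFun (congrArg coord h) 0
    omega

open scoped Classical in
theorem exists_facets_eq_pair {e : Cell (Fin 2)} (he : dim e = 1) :
    ∃ v w, v ≠ w ∧ facets e = {v, w} := by
  obtain ⟨h₀, h₁⟩ | ⟨h₀, h₁⟩ := horizontal_or_vertical he
  · refine ⟨_, _, fun h => ?_, facets_of_horizontal h₀ h₁⟩
    have : e 0 - 1 = e 0 + 1 := congrFun (congrArg coord h) 0
    omega
  · refine ⟨_, _, fun h => ?_, facets_of_vertical h₀ h₁⟩
    have : e 1 - 1 = e 1 + 1 := congrFun (congrArg coord h) 1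
    omega

end Plane

section Acyclic

variable {ι : Type*} [Fintype ι] {T : Set (Cell ι)}

/-- The mod 2 homology of the cells in `T`, relative to the cells outside `T`, vanishes: every
relative cycle on `T` is a relative boundary. -/
def Acyclic (T : Set (Cell ι)) : Prop :=
  ∀ z : Cell ι → ZMod 2, (∀ c ∈ T, boundary (T.indicator z) c = 0) →
    ∃ y : Cell ι → ZMod 2, ∀ c ∈ T, boundary (T.indicator y) c = z c

theorem Acyclic.of_fibers {κ : Type*} (p : Cell ι → κ)
    (hp : ∀ c ∈ T, ∀ d ∈ T, c ≤ d → p c = p d)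
    (h : ∀ c₀ ∈ T, Acyclic {c ∈ T | p c = p c₀}) : Acyclic T := by
  have restrict (z : Cell ι → ZMod 2) (k : κ) {c : Cell ι} (hc : c ∈ T) (hk : p c = k) :
      boundary ({c ∈ T | p c = k}.indicator z) c = boundary (T.indicator z) c := by
    refine boundary_congr fun d hd => ?_
    by_cases hdT : d ∈ T
    · have hdk : d ∈ {c ∈ T | p c = k} := ⟨hdT, hk ▸ (hp c hc d hdT (le_of_mem_cofacets hd)).symm⟩
      rw [indicator_of_mem hdk, indicator_of_mem hdT]
    · rw [indicator_of_notMem (fun h => hdT h.1), indicator_of_notMem hdT]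
  intro z hz
  have fiber (k : κ) : ∃ y : Cell ι → ZMod 2, ∀ c ∈ T, p c = k →
      boundary ({c ∈ T | p c = k}.indicator y) c = z c := by
    by_cases hk : ∃ c₀ ∈ T, p c₀ = k
    · obtain ⟨c₀, hc₀, rfl⟩ := hk
      obtain ⟨y, hy⟩ := h c₀ hc₀ z fun c hc => (restrict z _ hc.1 hc.2).trans (hz c hc.1)
      exact ⟨y, fun c hc hck => hy c ⟨hc, hck⟩⟩
    · exact ⟨0, fun c hc hck => (hk ⟨c, hc, hck⟩).elim⟩
  choose y hy using fiber
  refine ⟨fun c => y (p c) c, fun c hc => ?_⟩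
  rw [← hy (p c) c hc rfl, ← restrict _ (p c) hc rfl]
  exact congrArg (boundary · c) (indicator_congr fun d hd => congrFun (congrArg y hd.2) d)

/-- `f` is the only proper coface in `T` of its facet `e`, so that the pair can be collapsed. -/
structure FreePair (T : Set (Cell ι)) (e f : Cell ι) : Prop where
  left_mem : e ∈ T
  right_mem : f ∈ T
  isCofacet : f ∈ cofacets e
  eq_or_eq : ∀ d ∈ T, e ≤ d → d = e ∨ d = f

namespace FreePair

variable {e f : Cell ι}

theorem notMem_of_le (h : FreePair T e f) {c : Cell ι} (hc : e ≤ c) : c ∉ T \ {e, f} :=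
  fun hcT => hcT.2 (h.eq_or_eq c hcT.1 hc)

theorem boundary_indicator_left (h : FreePair T e f) (y : Cell ι → ZMod 2) :
    boundary (T.indicator y) e = y f := by
  rw [boundary_apply, Finset.sum_eq_single_of_mem f h.isCofacet, indicator_of_mem h.right_mem]
  refine fun d hd hdf => indicator_of_notMem (fun hdT => ?_) y
  exact (h.eq_or_eq d hdT (le_of_mem_cofacets hd)).elim (ne_of_mem_cofacets hd) hdf

theorem boundary_sdiff_indicator_of_ge (h : FreePair T e f) (z : Cell ι → ZMod 2) {c : Cell ι}
    (hc : e ≤ c) : boundary ((T \ {e, f}).indicator z) c = 0 :=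
  Finset.sum_eq_zero fun _ hd =>
    indicator_of_notMem (h.notMem_of_le (hc.trans (le_of_mem_cofacets hd))) z

theorem acyclic_sdiff (h : FreePair T e f) (hoc : OrdConnected T) (hT : Acyclic T) :
    Acyclic (T \ {e, f}) := by
  classical
  intro z hz
  obtain ⟨y, hy⟩ := hT ((T \ {e, f}).indicator z) fun c hc => by
    rw [indicator_indicator, inter_eq_right.2 sdiff_subset]
    by_cases hce : c ∈ T \ {e, f}
    · exact hz c hce
    · have hce : c = e ∨ c = f := by_contra fun hne => hce ⟨hc, hne⟩
      refine h.boundary_sdiff_indicator_of_ge z ?_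
      exact hce.elim ge_of_eq fun hcf => hcf ▸ le_of_mem_cofacets h.isCofacet
  have hyf : y f = 0 := by
    rw [← h.boundary_indicator_left y, hy e h.left_mem, indicator_of_notMem (h.notMem_of_le le_rfl)]
  set u : Cell ι → ZMod 2 := boundary (Pi.single f 1) with hu
  have hu_eq_zero {d : Cell ι} (hd : f ∉ cofacets d) : u d = 0 := by
    rw [hu, boundary_single, if_neg hd]
  -- Adding a multiple of the boundary of `f` makes the chain vanish at `e`.
  refine ⟨y + y e • u, fun c hc => ?_⟩
  have hvanish : boundary ((T \ {e, f}).indicator (y + y e • u)) c =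
      boundary (T.indicator y + y e • u) c := by
    refine boundary_congr fun d hd => ?_
    by_cases hdT : d ∈ T \ {e, f}
    · rw [indicator_of_mem hdT, Pi.add_apply, Pi.add_apply, indicator_of_mem hdT.1]
    rw [indicator_of_notMem hdT, Pi.add_apply, Pi.smul_apply]
    by_cases hdT' : d ∈ T
    · obtain rfl | rfl : d = e ∨ d = f := by_contra fun hne => hdT ⟨hdT', hne⟩
      · rw [hu, boundary_single, if_pos h.isCofacet, indicator_of_mem hdT', smul_eq_mul, mul_one,
          CharTwo.add_self_eq_zero]
      · rw [hu_eq_zero fun hd => ne_of_mem_cofacets hd rfl, indicator_of_mem hdT', hyf, smul_zero,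
          add_zero]
    · have hdf : f ∉ cofacets d := fun hdf =>
        hdT' (hoc.out hc.1 h.right_mem ⟨le_of_mem_cofacets hd, le_of_mem_cofacets hdf⟩)
      rw [hu_eq_zero hdf, indicator_of_notMem hdT', smul_zero, add_zero]
  rw [hvanish, map_add, map_smul, hu, boundary_boundary, smul_zero, add_zero, hy c hc.1,
    indicator_of_mem hc]

end FreePair

end Acyclic

section FreePair

variable {ι : Type*} [Fintype ι] {T : Set (Cell ι)}

/-- The number of cofacets of `c` that lie in `T`. -/
def codegree (T : Set (Cell ι)) (c : Cell ι) : ℕ := (T ∩ cofacets c).ncard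

theorem boundary_indicator_one (T : Set (Cell ι)) (c : Cell ι) :
    boundary (T.indicator 1) c = codegree T c := by
  classical
  have hcoe : T ∩ cofacets c = ((cofacets c).filter (· ∈ T) : Finset (Cell ι)) := by
    rw [Finset.coe_filter, inter_comm]
    rfl
  rw [codegree, hcoe, ncard_coe_finset, ← Finset.sum_boole]
  simp only [boundary_apply, indicator_apply, Pi.one_apply]

theorem boundary_indicator_eq_zero {c : Cell ι} (h : ∀ d ∈ cofacets c, d ∉ T)
    (z : Cell ι → ZMod 2) : boundary (T.indicator z) c = 0 :=
  Finset.sum_eq_zero fun d hd => indicator_of_notMem (h d hd) z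

theorem Acyclic.exists_odd_codegree (hT : Acyclic T) {f : Cell ι} (hf : f ∈ T)
    (htop : ∀ d ∈ T, dim d ≤ dim f) : ∃ c ∈ T, dim f = dim c + 1 ∧ Odd (codegree T c) := by
  set F : Set (Cell ι) := {d | dim d = dim f}
  obtain ⟨c, hcT, hc⟩ : ∃ c ∈ T, boundary (T.indicator (F.indicator 1)) c ≠ 0 := by
    by_contra! hcycle
    obtain ⟨y, hy⟩ := hT _ hcycle
    have hbdy : boundary (T.indicator y) f = 0 :=
      boundary_indicator_eq_zero (fun d hd hdT => by
        have := htop d hdT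
        have := (mem_cofacets.1 hd).2
        omega) y
    have hfF : f ∈ F := rfl
    rw [hy f hf, indicator_of_mem hfF] at hbdy
    exact one_ne_zero hbdy
  rw [indicator_indicator, boundary_indicator_one, ne_eq, ZMod.natCast_eq_zero_iff_even,
    Nat.not_even_iff_odd] at hc
  obtain ⟨d, ⟨-, hdf : dim d = dim f⟩, hdc⟩ := nonempty_of_ncard_ne_zero hc.pos.ne'
  have hdim : dim f = dim c + 1 := hdf ▸ (mem_cofacets.1 hdc).2
  have hF : F ∩ cofacets c = cofacets c :=
    inter_eq_right.2 fun d' hd' => (mem_cofacets.1 hd').2.trans hdim.symm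
  rw [codegree, inter_assoc, hF] at hc
  exact ⟨c, hcT, hdim, hc⟩

theorem Acyclic.codegree_ne_zero (hT : Acyclic T) {v : Cell ι} (hv : v ∈ T) (hdim : dim v = 0) :
    codegree T v ≠ 0 := by
  classical
  intro hiso
  obtain ⟨y, hy⟩ := hT (Pi.single v 1) fun c _ => Finset.sum_eq_zero fun d hd => by
    have hdv : d ≠ v := by
      rintro rfl
      have := (mem_cofacets.1 hd).2
      have := dim_nonneg c
      omega
    exact indicator_apply_eq_zero.2 fun _ => Pi.single_eq_of_ne hdv 1
  have hempty : T ∩ cofacets v = ∅ :=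
    (ncard_eq_zero ((cofacets v).finite_toSet.inter_of_right T)).1 hiso
  have hbdy : boundary (T.indicator y) v = 0 :=
    boundary_indicator_eq_zero (fun d hd hdT => hempty.subset ⟨hdT, hd⟩) y
  rw [hy v hv, Pi.single_eq_same] at hbdy
  exact one_ne_zero hbdy

theorem FreePair.of_codegree_eq_one {c : Cell ι} (hc : c ∈ T)
    (htop : ∀ d ∈ T, dim d ≤ dim c + 1) (hdeg : codegree T c = 1) : ∃ f, FreePair T c f := by
  obtain ⟨f, hf⟩ := ncard_eq_one.1 hdeg
  obtain ⟨hfT, hfc⟩ := hf.superset rfl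
  refine ⟨f, hc, hfT, hfc, fun d hd hcd => (eq_or_lt_of_le hcd).imp Eq.symm fun hlt => ?_⟩
  have := dim_strictMono hlt
  have := htop d hd
  exact hf.subset ⟨hd, mem_cofacets.2 ⟨hcd, by omega⟩⟩

end FreePair

section Plane

variable {T : Set (Cell (Fin 2))}

theorem Acyclic.eq_zero_of_boundary_eq_zero (hT : Acyclic T) (htop : ∀ c ∈ T, dim c ≤ 1)
    {z : Cell (Fin 2) → ZMod 2} (hz : ∀ v ∈ T, dim v = 0 → boundary (T.indicator z) v = 0)
    {e : Cell (Fin 2)} (he : e ∈ T) (hdim : dim e = 1) : z e = 0 := by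
  have hcof {c : Cell (Fin 2)} (hc : dim c = 1) : ∀ d ∈ cofacets c, d ∉ T := fun d hd hdT => by
    have := (mem_cofacets.1 hd).2
    have := htop d hdT
    omega
  obtain ⟨y, hy⟩ := hT z fun c hc => by
    obtain h | h : dim c = 0 ∨ dim c = 1 := by
      have := dim_nonneg c
      have := htop c hc
      omega
    · exact hz c hc h
    · exact boundary_indicator_eq_zero (hcof h) z
  rw [← hy e he, boundary_indicator_eq_zero (hcof hdim)]

theorem Acyclic.ncard_edges_le (hfin : T.Finite) (hT : Acyclic T) (htop : ∀ c ∈ T, dim c ≤ 1) :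
    {e ∈ T | dim e = 1}.ncard ≤ {v ∈ T | dim v = 0}.ncard := by
  classical
  set E := {e ∈ T | dim e = 1}
  set V := {v ∈ T | dim v = 0}
  have : Fintype E := (hfin.sep _).fintype
  have : Fintype V := (hfin.sep _).fintype
  let D : (E → ZMod 2) →ₗ[ZMod 2] V → ZMod 2 :=
    LinearMap.funLeft _ _ ((↑) : V → Cell (Fin 2)) ∘ₗ boundary ∘ₗ
      Function.ExtendByZero.linearMap _ ((↑) : E → Cell (Fin 2))
  have hD : Function.Injective D := by
    refine (injective_iff_map_eq_zero D).2 fun z hz => funext fun e => ?_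
    set z' : Cell (Fin 2) → ZMod 2 := Function.extend Subtype.val z 0
    have hz' : z' e = z e := Subtype.val_injective.extend_apply z 0 e
    have hsupp : T.indicator z' = z' := indicator_eq_self.2 fun c hc => by
      by_contra hcT
      refine hc (Function.extend_apply' z (0 : Cell (Fin 2) → ZMod 2) c ?_)
      exact fun ⟨e', he'⟩ => hcT (he' ▸ e'.2.1)
    rw [← hz', Pi.zero_apply]
    refine hT.eq_zero_of_boundary_eq_zero htop (fun v hv hv0 => ?_) e.2.1 e.2.2
    rw [hsupp]
    exact congrFun hz ⟨v, hv, hv0⟩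
  simpa [← Nat.card_eq_fintype_card] using LinearMap.finrank_le_finrank_of_injective hD

theorem codegree_le_two {e : Cell (Fin 2)} (he : dim e = 1) : codegree T e ≤ 2 := by
  classical
  obtain ⟨f, g, -, hfg⟩ := exists_cofacets_eq_pair he
  refine (ncard_le_ncard inter_subset_right (Finset.finite_toSet _)).trans ?_
  rw [ncard_coe_finset, hfg]
  exact Finset.card_le_two

open scoped Finset in
theorem sum_codegree_le {V E : Finset (Cell (Fin 2))} (hV : ∀ v ∈ V, T ∩ cofacets v ⊆ E)
    (hE : ∀ e ∈ E, dim e = 1) : ∑ v ∈ V, codegree T v ≤ 2 * #E := by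
  classical
  calc ∑ v ∈ V, codegree T v
      ≤ ∑ v ∈ V, #(E.bipartiteAbove (fun v e => e ∈ cofacets v) v) :=
        Finset.sum_le_sum fun v hv => by
          rw [← ncard_coe_finset, Finset.coe_bipartiteAbove]
          exact ncard_le_ncard (fun e he => ⟨hV v hv he, he.2⟩) ((Finset.finite_toSet E).sep _)
    _ = ∑ e ∈ E, #(V.bipartiteBelow (fun v e => e ∈ cofacets v) e) :=
        Finset.sum_card_bipartiteAbove_eq_sum_card_bipartiteBelow _
    _ ≤ ∑ _e ∈ E, 2 := Finset.sum_le_sum fun e he => by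
        obtain ⟨v, w, -, hvw⟩ := exists_facets_eq_pair (hE e he)
        refine (Finset.card_le_card fun c hc => ?_).trans (hvw ▸ Finset.card_le_two)
        exact mem_facets.2 (Finset.mem_filter.1 hc).2
    _ = 2 * #E := by rw [Finset.sum_const, smul_eq_mul, mul_comm]

theorem Acyclic.exists_codegree_eq_one (hfin : T.Finite) (hT : Acyclic T)
    (htop : ∀ c ∈ T, dim c ≤ 1) {v₀ : Cell (Fin 2)} (hv₀ : v₀ ∈ T) (hdim : dim v₀ = 0)
    (hodd : Odd (codegree T v₀)) : ∃ v ∈ T, dim v = 0 ∧ codegree T v = 1 := by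
  classical
  by_contra! hne
  have hV : {v ∈ T | dim v = 0}.Finite := hfin.sep _
  have hE : {e ∈ T | dim e = 1}.Finite := hfin.sep _
  have htwo {v : Cell (Fin 2)} (hv : v ∈ T) (hv0 : dim v = 0) : 2 ≤ codegree T v := by
    have := hT.codegree_ne_zero hv hv0
    have := hne v hv hv0
    omega
  have hlt : ∑ _v ∈ hV.toFinset, 2 < ∑ v ∈ hV.toFinset, codegree T v := by
    refine Finset.sum_lt_sum (fun v hv => ?_) ⟨v₀, hV.mem_toFinset.2 ⟨hv₀, hdim⟩, ?_⟩
    · exact htwo (hV.mem_toFinset.1 hv).1 (hV.mem_toFinset.1 hv).2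
    · obtain ⟨k, hk⟩ := hodd
      have := htwo hv₀ hdim
      omega
  have hle : ∑ v ∈ hV.toFinset, codegree T v ≤ 2 * hE.toFinset.card := by
    refine sum_codegree_le (fun v hv e he => Finset.mem_coe.2 (hE.mem_toFinset.2 ⟨he.1, ?_⟩))
      fun e he => (hE.mem_toFinset.1 he).2
    rw [(mem_cofacets.1 he.2).2, (hV.mem_toFinset.1 hv).2, zero_add]
  have hcard := hT.ncard_edges_le hfin htop
  rw [ncard_eq_toFinset_card _ hE, ncard_eq_toFinset_card _ hV] at hcard
  rw [Finset.sum_const, smul_eq_mul] at hlt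
  omega

theorem Acyclic.exists_freePair (hfin : T.Finite) (hT : Acyclic T) (hne : T.Nonempty) :
    ∃ e f, FreePair T e f := by
  obtain ⟨f, hf, htop⟩ := T.exists_max_image dim hfin hne
  obtain ⟨c, hc, hdim, hodd⟩ := hT.exists_odd_codegree hf htop
  rw [hdim] at htop
  have := dim_nonneg c
  obtain hc0 | hc1 : dim c = 0 ∨ dim c = 1 := by
    have := dim_two_cases f
    omega
  · rw [hc0, zero_add] at htop
    obtain ⟨v, hv, hv0, hdeg⟩ := hT.exists_codegree_eq_one hfin htop hc hc0 hodd
    exact ⟨v, FreePair.of_codegree_eq_one hv (by simpa only [hv0, zero_add] using htop) hdeg⟩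
  · refine ⟨c, FreePair.of_codegree_eq_one hc htop ?_⟩
    have : codegree T c ≤ 2 := codegree_le_two hc1
    obtain ⟨k, hk⟩ := hodd
    omega

end Plane

section Plane

variable {e : Cell (Fin 2)}

theorem boundary_of_horizontal (h₀ : e 0 % 2 = 1) (h₁ : e 1 % 2 = 0)
    (z : Cell (Fin 2) → ZMod 2) :
    boundary z e = z ⟨![e 0, e 1 - 1]⟩ + z ⟨![e 0, e 1 + 1]⟩ := by
  classical
  rw [boundary_apply, cofacets_of_horizontal h₀ h₁, Finset.sum_pair fun h => ?_]
  have : e 1 - 1 = e 1 + 1 := congrFun (congrArg coord h) 1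
  omega

theorem boundary_of_vertical (h₀ : e 0 % 2 = 0) (h₁ : e 1 % 2 = 1)
    (z : Cell (Fin 2) → ZMod 2) :
    boundary z e = z ⟨![e 0 - 1, e 1]⟩ + z ⟨![e 0 + 1, e 1]⟩ := by
  classical
  rw [boundary_apply, cofacets_of_vertical h₀ h₁, Finset.sum_pair fun h => ?_]
  have : e 0 - 1 = e 0 + 1 := congrFun (congrArg coord h) 0
  omega

theorem coboundary_of_horizontal (h₀ : e 0 % 2 = 1) (h₁ : e 1 % 2 = 0)
    (φ : Cell (Fin 2) → ZMod 2) :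
    coboundary φ e = φ ⟨![e 0 - 1, e 1]⟩ + φ ⟨![e 0 + 1, e 1]⟩ := by
  classical
  rw [coboundary, facets_of_horizontal h₀ h₁, Finset.sum_pair fun h => ?_]
  have : e 0 - 1 = e 0 + 1 := congrFun (congrArg coord h) 0
  omega

theorem coboundary_of_vertical (h₀ : e 0 % 2 = 0) (h₁ : e 1 % 2 = 1)
    (φ : Cell (Fin 2) → ZMod 2) :
    coboundary φ e = φ ⟨![e 0, e 1 - 1]⟩ + φ ⟨![e 0, e 1 + 1]⟩ := by
  classical
  rw [coboundary, facets_of_vertical h₀ h₁, Finset.sum_pair fun h => ?_]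
  have : e 1 - 1 = e 1 + 1 := congrFun (congrArg coord h) 1
  omega

/- The filling is explicit: sum the edges crossed by the downward ray from a face. -/
theorem exists_boundary_eq {z : Cell (Fin 2) → ZMod 2} {E : Finset (Cell (Fin 2))}
    (hsupp : Function.support z ⊆ E) (hE : ∀ e ∈ E, dim e = 1) (hz : boundary z = 0) :
    ∃ y : Cell (Fin 2) → ZMod 2, ∀ e, dim e = 1 → boundary y e = z e := by
  classical
  refine ⟨fun f => ∑ d ∈ E, if d 0 = f 0 ∧ d 1 < f 1 then z d else 0, fun e he => ?_⟩
  have hsum : z e = ∑ d ∈ E, if d = e then z d else 0 := by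
    rw [Finset.sum_ite_eq']
    split_ifs with he
    · rfl
    · exact Function.notMem_support.1 fun h => he (hsupp h)
  obtain ⟨h₀, h₁⟩ | ⟨h₀, h₁⟩ := horizontal_or_vertical he
  · rw [hsum, boundary_of_horizontal h₀ h₁, ← Finset.sum_add_distrib]
    refine Finset.sum_congr rfl fun d hd => ?_
    have := horizontal_or_vertical (hE d hd)
    simp only [ext_two, Matrix.cons_val_zero, Matrix.cons_val_one]
    grind
  · -- The two rays from the sides of a vertical edge differ by the ray from the edge itself.
    let ray (u : Cell (Fin 2)) : ZMod 2 := if u 0 = e 0 ∧ u 1 < e 1 then 1 else 0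
    have hray : ∑ d ∈ E, coboundary ray d * z d = 0 := by
      have hzero : Function.support (boundary z) ⊆ (∅ : Finset (Cell (Fin 2))) := by
        rw [hz, Function.support_zero]
        exact empty_subset _
      rw [sum_coboundary_mul hsupp hzero, Finset.sum_empty]
    rw [hsum, boundary_of_vertical h₀ h₁, ← Finset.sum_add_distrib]
    refine (Finset.sum_congr rfl fun d hd => ?_).trans
      (Finset.sum_add_distrib.trans ((congrArg (· + _) hray).trans (zero_add _)))
    obtain ⟨k₀, k₁⟩ | ⟨k₀, k₁⟩ := horizontal_or_vertical (hE d hd)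
    · simp only [coboundary_of_horizontal k₀ k₁, ray, ext_two, Matrix.cons_val_zero,
        Matrix.cons_val_one]
      grind
    · simp only [coboundary_of_vertical k₀ k₁, ray, ext_two, Matrix.cons_val_zero,
        Matrix.cons_val_one]
      grind

end Plane

theorem Acyclic.of_linkedClass {ι : Type*} [Fintype ι] {T : Set (Cell ι)}
    (h : ∀ c ∈ T, Acyclic (linkedClass T c)) : Acyclic T := by
  refine .of_fibers (linkedClass T) (fun c hc d hd hcd => ?_) fun c hc => ?_
  · have := Linked.of_le hc hd hcd
    exact ext fun b => and_congr_right fun _ => ⟨this.symm.trans, this.trans⟩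
  · convert h c hc using 1
    refine ext fun b => and_congr_right fun hb => ⟨fun hbc => ?_, fun hcb => ?_⟩
    · have : b ∈ linkedClass T b := ⟨hb, .refl T b⟩
      exact (hbc ▸ this).2
    · exact ext fun d => and_congr_right fun _ => ⟨hcb.trans, hcb.symm.trans⟩

section Constancy

variable {β : Type*} {c d v w f g : Cell (Fin 2)} {ψ : Cell (Fin 2) → β}

/-- A vertex of the cell `c`. -/
def bottom {ι : Type*} (c : Cell ι) : Cell ι := ⟨fun i => c i - c i % 2⟩

/-- A cell of maximal dimension having `c` as a face. -/
def top {ι : Type*} (c : Cell ι) : Cell ι := ⟨fun i => c i + (1 - c i % 2)⟩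

theorem bottom_le {ι : Type*} (c : Cell ι) : bottom c ≤ c := fun i => by
  simp only [bottom, IsFace]
  omega

theorem le_top {ι : Type*} (c : Cell ι) : c ≤ top c := fun i => by
  simp only [top, IsFace]
  omega

theorem dim_bottom {ι : Type*} [Fintype ι] (c : Cell ι) : dim (bottom c) = 0 :=
  Finset.sum_eq_zero fun i _ => by
    simp only [bottom]
    omega

theorem dim_top (c : Cell (Fin 2)) : dim (top c) = 2 := by
  rw [dim_two]
  simp only [top]
  omega

theorem eq_of_vertices_le
    (h : ∀ e ≤ c, dim e = 1 → ∀ v ∈ facets e, ∀ w ∈ facets e, ψ v = ψ w)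
    (hv : v ≤ c) (hw : w ≤ c) (hv0 : dim v = 0) (hw0 : dim w = 0) : ψ v = ψ w := by
  have hodd (i : Fin 2) (hne : v i ≠ w i) : c i % 2 = 1 := by
    have := hv i
    have := hw i
    simp only [IsFace] at *
    omega
  simp only [mem_facets, mem_cofacets, le_two, dim_two] at h hv hw hv0 hw0
  -- Change one coordinate at a time, moving along the sides of `c`.
  trans ψ ⟨![v 0, w 1]⟩
  · by_cases heq : v 1 = w 1
    · exact congrArg ψ (ext_two.2 ⟨rfl, heq⟩)
    · have := hodd 1 heq
      refine h ⟨![v 0, c 1]⟩ ⟨hv.1, .inl rfl⟩ ?_ v ⟨⟨.inl rfl, hv.2⟩, ?_⟩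
        ⟨![v 0, w 1]⟩ ⟨⟨.inl rfl, hw.2⟩, ?_⟩ <;>
        simp only [Matrix.cons_val_zero, Matrix.cons_val_one] <;> omega
  · by_cases heq : v 0 = w 0
    · exact congrArg ψ (ext_two.2 ⟨heq, rfl⟩)
    · have := hodd 0 heq
      refine h ⟨![c 0, w 1]⟩ ⟨.inl rfl, hw.2⟩ ?_ ⟨![v 0, w 1]⟩ ⟨⟨hv.1, .inl rfl⟩, ?_⟩
        w ⟨⟨hw.1, .inl rfl⟩, ?_⟩ <;>
        simp only [Matrix.cons_val_zero, Matrix.cons_val_one] <;> omega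

theorem eq_of_le_faces
    (h : ∀ e ≥ c, dim e = 1 → ∀ f ∈ cofacets e, ∀ g ∈ cofacets e, ψ f = ψ g)
    (hf : c ≤ f) (hg : c ≤ g) (hf2 : dim f = 2) (hg2 : dim g = 2) : ψ f = ψ g := by
  have heven (i : Fin 2) (hne : f i ≠ g i) : c i % 2 = 0 := by
    have := hf i
    have := hg i
    simp only [IsFace] at *
    omega
  simp only [mem_cofacets, ge_iff_le, le_two, dim_two] at h hf hg hf2 hg2
  trans ψ ⟨![f 0, g 1]⟩
  · by_cases heq : f 1 = g 1
    · exact congrArg ψ (ext_two.2 ⟨rfl, heq⟩)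
    · have := heven 1 heq
      refine h ⟨![f 0, c 1]⟩ ⟨hf.1, .inl rfl⟩ ?_ f ⟨⟨.inl rfl, hf.2⟩, ?_⟩
        ⟨![f 0, g 1]⟩ ⟨⟨.inl rfl, hg.2⟩, ?_⟩ <;>
        simp only [Matrix.cons_val_zero, Matrix.cons_val_one] <;> omega
  · by_cases heq : f 0 = g 0
    · exact congrArg ψ (ext_two.2 ⟨heq, rfl⟩)
    · have := heven 0 heq
      refine h ⟨![c 0, g 1]⟩ ⟨.inl rfl, hg.2⟩ ?_ ⟨![f 0, g 1]⟩ ⟨⟨hf.1, .inl rfl⟩, ?_⟩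
        g ⟨⟨hg.1, .inl rfl⟩, ?_⟩ <;>
        simp only [Matrix.cons_val_zero, Matrix.cons_val_one] <;> omega

theorem eq_of_vertices_le_of_linked {K : Set (Cell (Fin 2))} (hK : IsLowerSet K)
    (h : ∀ e ∈ K, dim e = 1 → ∀ v ∈ facets e, ∀ w ∈ facets e, ψ v = ψ w)
    (hcd : Linked K c d) (hd : d ∈ K) (hv : v ≤ c) (hw : w ≤ d)
    (hv0 : dim v = 0) (hw0 : dim w = 0) : ψ v = ψ w := by
  have hsides {c : Cell (Fin 2)} (hc : c ∈ K) {v w : Cell (Fin 2)} :=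
    eq_of_vertices_le (ψ := ψ) (c := c) (v := v) (w := w) fun e he => h e (hK he hc)
  calc ψ v = ψ (bottom c) := hsides (hcd.mem_iff.2 hd) hv (bottom_le c) hv0 (dim_bottom c)
    _ = ψ (bottom d) := hcd.eq_of_forall_le (φ := ψ ∘ bottom) fun a _ b hb hab =>
      hsides hb ((bottom_le a).trans hab) (bottom_le b) (dim_bottom a) (dim_bottom b)
    _ = ψ w := hsides hd (bottom_le d) hw (dim_bottom d) hw0

theorem eq_of_le_faces_of_linked {U : Set (Cell (Fin 2))} (hU : IsUpperSet U)
    (h : ∀ e ∈ U, dim e = 1 → ∀ f ∈ cofacets e, ∀ g ∈ cofacets e, ψ f = ψ g)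
    (hcd : Linked U c d) (hd : d ∈ U) (hf : c ≤ f) (hg : d ≤ g)
    (hf2 : dim f = 2) (hg2 : dim g = 2) : ψ f = ψ g := by
  have hsides {c : Cell (Fin 2)} (hc : c ∈ U) {f g : Cell (Fin 2)} :=
    eq_of_le_faces (ψ := ψ) (c := c) (f := f) (g := g) fun e he => h e (hU he hc)
  calc ψ f = ψ (top c) := hsides (hcd.mem_iff.2 hd) hf (le_top c) hf2 (dim_top c)
    _ = ψ (top d) := hcd.eq_of_forall_le (φ := ψ ∘ top) fun a ha b _ hab =>
      hsides ha (le_top a) (hab.trans (le_top b)) (dim_top a) (dim_top b)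
    _ = ψ g := hsides hd (le_top d) hg (dim_top d) hg2

end Constancy

section Homologous

theorem eq_of_boundary_eq_zero {D : Cell (Fin 2) → ZMod 2} {e f g : Cell (Fin 2)}
    (he : dim e = 1) (hD : boundary D e = 0) (hf : f ∈ cofacets e) (hg : g ∈ cofacets e) :
    D f = D g := by
  classical
  obtain ⟨f₀, g₀, hne, heq⟩ := exists_cofacets_eq_pair he
  rw [boundary_apply, heq, Finset.sum_pair hne, CharTwo.add_eq_zero] at hD
  rw [heq, Finset.mem_insert, Finset.mem_singleton] at hf hg
  rcases hf with rfl | rfl <;> rcases hg with rfl | rfl <;> simp only [hD]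

theorem boundary_const {e : Cell (Fin 2)} (he : dim e = 1) (n : ZMod 2) :
    boundary (fun _ => n) e = 0 := by
  classical
  obtain ⟨f, g, hne, heq⟩ := exists_cofacets_eq_pair he
  rw [boundary_apply, heq, Finset.sum_pair hne, CharTwo.add_self_eq_zero]

theorem coboundary_one {e : Cell (Fin 2)} (he : dim e = 1) : coboundary 1 e = 0 := by
  classical
  obtain ⟨v, w, hne, heq⟩ := exists_facets_eq_pair he
  simp only [coboundary, heq, Finset.sum_pair hne, Pi.one_apply, CharTwo.add_self_eq_zero]

/-- The 1-chains mod 2 supported on the edges in `L`. -/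
def edgeChains {ι : Type*} [Fintype ι] (L : Set (Cell ι)) :
    Submodule (ZMod 2) (Cell ι → ZMod 2) where
  carrier := {δ | ∀ e, ¬(e ∈ L ∧ dim e = 1) → δ e = 0}
  zero_mem' _ _ := rfl
  add_mem' hδ hδ' e he := by rw [Pi.add_apply, hδ e he, hδ' e he, add_zero]
  smul_mem' r δ hδ e he := by rw [Pi.smul_apply, hδ e he, smul_zero]

variable {L : Set (Cell (Fin 2))} {u v w : Cell (Fin 2)}

open scoped Classical in
/-- The vertices `v` and `w` are homologous mod 2 in the subcomplex `L`: their sum bounds a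
1-chain of `L`. -/
def Homologous (L : Set (Cell (Fin 2))) (v w : Cell (Fin 2)) : Prop :=
  Pi.single v 1 + Pi.single w 1 ∈ (edgeChains L).map boundary

namespace Homologous

theorem refl (L : Set (Cell (Fin 2))) (v : Cell (Fin 2)) : Homologous L v v := by
  rw [Homologous, ZModModule.add_self]
  exact zero_mem _

theorem symm (h : Homologous L v w) : Homologous L w v := by
  rwa [Homologous, add_comm]

theorem trans (h : Homologous L u v) (h' : Homologous L v w) : Homologous L u w := by
  have := add_mem h h'
  rwa [ZModModule.add_add_add_cancel] at this

theorem of_mem_facets {e : Cell (Fin 2)} (he : e ∈ L) (hdim : dim e = 1) (hv : v ∈ facets e)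
    (hw : w ∈ facets e) : Homologous L v w := by
  classical
  by_cases hvw : v = w
  · exact hvw ▸ refl L v
  have hfacets : facets e = {v, w} := by
    obtain ⟨v₀, w₀, hne, heq⟩ := exists_facets_eq_pair hdim
    refine (Finset.eq_of_subset_of_card_le (Finset.insert_subset hv ?_) ?_).symm
    · exact Finset.singleton_subset_iff.2 hw
    · rw [heq, Finset.card_pair hne, Finset.card_pair hvw]
  refine ⟨Pi.single e 1, fun d hd => ?_, funext fun c => ?_⟩
  · exact Pi.single_eq_of_ne (fun hde : d = e => hd (hde ▸ ⟨he, hdim⟩)) _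
  · simp only [boundary_single, ← mem_facets, hfacets, Finset.mem_insert, Finset.mem_singleton,
      Pi.add_apply, Pi.single_apply]
    grind

theorem of_linked {c d : Cell (Fin 2)} (hL : IsLowerSet L) (hcd : Linked L c d) (hd : d ∈ L)
    (hv : v ≤ c) (hw : w ≤ d) (hv0 : dim v = 0) (hw0 : dim w = 0) : Homologous L v w := by
  have hclass : Homologous L v = Homologous L w :=
    eq_of_vertices_le_of_linked hL (fun e he hdim a ha b hb => funext fun x => propext
      ⟨(of_mem_facets he hdim ha hb).symm.trans, (of_mem_facets he hdim ha hb).trans⟩)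
      hcd hd hv hw hv0 hw0
  rw [hclass]
  exact refl L w

end Homologous

theorem boundary_mem_map_edgeChains {ζ : Cell (Fin 2) → ZMod 2} {E : Finset (Cell (Fin 2))}
    (hsupp : Function.support ζ ⊆ E) (hE : ∀ e ∈ E, dim e = 1)
    (h : ∀ v w, boundary ζ v ≠ 0 → boundary ζ w ≠ 0 → Homologous L v w) :
    boundary ζ ∈ (edgeChains L).map boundary := by
  classical
  by_cases hzero : boundary ζ = 0
  · exact hzero ▸ zero_mem _
  obtain ⟨w, hw⟩ := Function.ne_iff.1 hzero
  set V := E.biUnion facets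
  have hV : Function.support (boundary ζ) ⊆ V := fun v hv => by
    obtain ⟨e, he, hζ⟩ := Finset.exists_ne_zero_of_sum_ne_zero hv
    exact Finset.mem_biUnion.2 ⟨e, hsupp hζ, mem_facets.2 he⟩
  have heven : ∑ v ∈ V, boundary ζ v = 0 := by
    have := sum_coboundary_mul hsupp hV 1
    simp only [Pi.one_apply, one_mul] at this
    rw [← this]
    exact Finset.sum_eq_zero fun e he => by rw [coboundary_one (hE e he), zero_mul]
  have hsum : boundary ζ = ∑ v ∈ V, boundary ζ v • (Pi.single v 1 + Pi.single w 1) := by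
    simp only [smul_add, Finset.sum_add_distrib, ← Finset.sum_smul, heven, zero_smul, add_zero]
    funext c
    simp only [Finset.sum_apply, Pi.smul_apply, Pi.single_apply, smul_eq_mul, mul_ite, mul_one,
      mul_zero, Finset.sum_ite_eq]
    split_ifs with hc
    · rfl
    · exact Function.notMem_support.1 fun h => hc (hV h)
  rw [hsum]
  refine sum_mem fun v _ => ?_
  by_cases hv : boundary ζ v = 0
  · rw [hv, zero_smul]
    exact zero_mem _
  · exact Submodule.smul_mem _ _ (h v w hv hw)

end Homologous

section Update

variable {ι : Type*} [DecidableEq ι] {c d : Cell ι} {i j : ι} {m : ℤ}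

/-- The cell `c` with its `i`-th coordinate replaced by `m`. -/
def update (c : Cell ι) (i : ι) (m : ℤ) : Cell ι := ⟨Function.update c i m⟩

theorem update_self (c : Cell ι) (i : ι) (m : ℤ) : c.update i m i = m := Function.update_self ..

theorem update_of_ne (h : j ≠ i) (c : Cell ι) (m : ℤ) : c.update i m j = c j :=
  Function.update_of_ne h ..

theorem le_update (h : IsFace (c i) m) : c ≤ c.update i m := fun j => by
  obtain rfl | hj := eq_or_ne j i
  · rwa [update_self]
  · exact .inl (update_of_ne hj c m).symm

theorem update_le_of_le (h : c ≤ d) : c.update i (d i) ≤ d := fun j => by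
  obtain rfl | hj := eq_or_ne j i
  · exact .inl (update_self ..)
  · rw [update_of_ne hj]
    exact h j

theorem update_mono (h : c ≤ d) : c.update i m ≤ d.update i m := fun j => by
  obtain rfl | hj := eq_or_ne j i
  · exact .inl ((update_self ..).trans (update_self ..).symm)
  · rw [update_of_ne hj, update_of_ne hj]
    exact h j

theorem dim_update [Fintype ι] (c : Cell ι) (i : ι) (m : ℤ) :
    dim (c.update i m) + c i % 2 = dim c + m % 2 := by
  have hrest : ∑ j ∈ Finset.univ.erase i, c.update i m j % 2 =
      ∑ j ∈ Finset.univ.erase i, c j % 2 :=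
    Finset.sum_congr rfl fun j hj => by rw [update_of_ne (Finset.ne_of_mem_erase hj)]
  simp only [dim, ← Finset.add_sum_erase _ _ (Finset.mem_univ i), update_self, hrest]
  ring

end Update

section Transverse

variable {ι : Type*} {A B : Set (Cell ι)} {c v : Cell ι} {i j : ι}

/-- A finite set of cells closed under faces in which every cell is a face of a cell of full
dimension. -/
structure IsPureComplex (A : Set (Cell ι)) : Prop where
  isLowerSet : IsLowerSet A
  finite : A.Finite
  exists_ge : ∀ c ∈ A, ∃ f ∈ A, c ≤ f ∧ ∀ i, f i % 2 = 1

variable [DecidableEq ι]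

/-- The frontier of `A` has no piece inside the hyperplane where the `i`-th coordinate is `m`. -/
def NotWall (A : Set (Cell ι)) (i : ι) (m : ℤ) : Prop :=
  ∀ c : Cell ι, c i = m → ∀ m', IsFace m m' → (c ∈ A ↔ c.update i m' ∈ A)

/-- The frontiers of `A` and `B` never run along the same hyperplane. -/
def Transverse (A B : Set (Cell ι)) : Prop := ∀ i m, NotWall A i m ∨ NotWall B i m

namespace Transverse

theorem symm (h : Transverse A B) : Transverse B A := fun i m => (h i m).symm

theorem update_mem_union (h : Transverse A B) (hc : c ∈ A ∩ B) {m : ℤ} (hm : IsFace (c i) m) :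
    c.update i m ∈ A ∪ B :=
  (h i (c i)).imp (fun hA => (hA c rfl m hm).1 hc.1) fun hB => (hB c rfl m hm).1 hc.2

theorem exists_update_mem_sdiff (h : Transverse A B) (hA : IsPureComplex A)
    (hB : IsPureComplex B) (hv : v ∈ A ∩ B) (hij : i ≠ j) {p : ℤ}
    (he : v.update i p ∈ A \ B) (hp : IsFace (v i) p) :
    ∃ b, IsFace (v j) b ∧ b % 2 = 1 ∧ v.update j b ∈ A ∩ B ∧
      (v.update i p).update j b ∈ A \ B := by
  have hve := le_update hp
  have hej : v.update i p j = v j := update_of_ne hij.symm ..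
  obtain hAj | hBj := h j (v j)
  · obtain ⟨f, hf, hvf, hodd⟩ := hB.exists_ge v hv.2
    refine ⟨f j, hvf j, hodd j, ⟨(hAj v rfl _ (hvf j)).1 hv.1, ?_⟩, ?_, fun hmem => he.2 ?_⟩
    · exact hB.isLowerSet (update_le_of_le hvf) hf
    · exact (hAj _ hej _ (hvf j)).1 he.1
    · exact hB.isLowerSet (le_update (hej ▸ hvf j)) hmem
  · obtain ⟨f, hf, hef, hodd⟩ := hA.exists_ge _ he.1
    have hvf := hve.trans hef
    refine ⟨f j, hvf j, hodd j, ⟨?_, (hBj v rfl _ (hvf j)).1 hv.2⟩, ?_, fun hmem => he.2 ?_⟩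
    · exact hA.isLowerSet (update_le_of_le hvf) hf
    · exact hA.isLowerSet (update_le_of_le hef) hf
    · exact (hBj _ hej _ (hvf j)).2 hmem

end Transverse

theorem Transverse.dim_eq_zero {A B : Set (Cell (Fin 2))} (h : Transverse A B)
    {c d : Cell (Fin 2)} (hc : c ∈ A ∩ B) (hcd : c ≤ d) (hd : d ∉ A ∪ B) : dim c = 0 := by
  by_contra hdim
  have hface := le_two.1 hcd
  rw [dim_two] at hdim
  simp only [IsFace] at hface
  obtain heq | heq : d 0 = c 0 ∨ d 1 = c 1 := by omega
  · refine hd (?_ : d ∈ A ∪ B)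
    have : d = c.update 1 (d 1) := ext_two.2 ⟨heq, rfl⟩
    exact this ▸ h.update_mem_union hc (hcd 1)
  · refine hd (?_ : d ∈ A ∪ B)
    have : d = c.update 0 (d 0) := ext_two.2 ⟨rfl, heq⟩
    exact this ▸ h.update_mem_union hc (hcd 0)

end Transverse

section RegularSdiff

variable {A B : Set (Cell (Fin 2))}

/-- The combinatorial content of regularity of the components of `A \ B`: each of them touches
exactly one component of `A ∩ B` and exactly one component of the complement of `A ∪ B`. -/
structure RegularSdiff (A B : Set (Cell (Fin 2))) : Prop where
  exists_le : ∀ c ∈ A \ B, ∃ d ∈ A \ B, Linked (A \ B) c d ∧ ∃ b ∈ A ∩ B, b ≤ d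
  exists_ge : ∀ c ∈ A \ B, ∃ d ∈ A \ B, Linked (A \ B) c d ∧ ∃ b ∈ Aᶜ ∩ Bᶜ, d ≤ b
  linked_lower : ∀ c ∈ A \ B, ∀ c' ∈ A \ B, Linked (A \ B) c c' → ∀ b ∈ A ∩ B, b ≤ c →
    0 < dim b → ∀ b' ∈ A ∩ B, b' ≤ c' → 0 < dim b' → Linked (A ∩ B) b b'
  linked_upper : ∀ c ∈ A \ B, ∀ c' ∈ A \ B, Linked (A \ B) c c' → ∀ b ∈ Aᶜ ∩ Bᶜ, c ≤ b →
    0 < dim c → ∀ b' ∈ Aᶜ ∩ Bᶜ, c' ≤ b' → 0 < dim c' → Linked (Aᶜ ∩ Bᶜ) b b'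

theorem boundary_indicator_linkedClass {ι : Type*} [Fintype ι] {A B : Set (Cell ι)}
    {c₀ c : Cell ι} (hB : IsLowerSet B) (hc : c ∈ linkedClass (A \ B) c₀)
    (z : Cell ι → ZMod 2) :
    boundary ((linkedClass (A \ B) c₀).indicator z) c = boundary (A.indicator z) c := by
  refine boundary_congr fun d hd => ?_
  have hcd := le_of_mem_cofacets hd
  by_cases hdA : d ∈ A
  · have : d ∈ A \ B := ⟨hdA, fun hdB => hc.1.2 (hB hcd hdB)⟩
    rw [indicator_of_mem hdA, indicator_of_mem (mem_linkedClass_of_le hc this hcd)]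
  · rw [indicator_of_notMem hdA, indicator_of_notMem fun h => hdA h.1.1]

theorem Acyclic.of_dim_cases {T : Set (Cell (Fin 2))}
    (h₀ : ∀ z : Cell (Fin 2) → ZMod 2, ∃ y : Cell (Fin 2) → ZMod 2, ∀ v ∈ T, dim v = 0 →
      boundary (T.indicator y) v = z v)
    (h₁ : ∀ z : Cell (Fin 2) → ZMod 2, (∀ v ∈ T, dim v = 0 → boundary (T.indicator z) v = 0) →
      ∃ y : Cell (Fin 2) → ZMod 2, ∀ e ∈ T, dim e = 1 → boundary (T.indicator y) e = z e)
    (h₂ : ∀ z : Cell (Fin 2) → ZMod 2, (∀ e ∈ T, dim e = 1 → boundary (T.indicator z) e = 0) →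
      ∀ f ∈ T, dim f = 2 → z f = 0) : Acyclic T := by
  classical
  intro z hz
  obtain ⟨y₁, hy₁⟩ := h₀ z
  obtain ⟨y₂, hy₂⟩ := h₁ z fun v hv _ => hz v hv
  have glue {k : ℤ} {c : Cell (Fin 2)} {y y' : Cell (Fin 2) → ZMod 2} (hc : dim c = k)
      (hyy' : ∀ d, dim d = k + 1 → y d = y' d) :
      boundary (T.indicator y) c = boundary (T.indicator y') c :=
    boundary_congr fun d hd => by
      simp only [indicator_apply, hyy' d (hc ▸ (mem_cofacets.1 hd).2)]
  refine ⟨fun c => if dim c = 1 then y₁ c else y₂ c, fun c hc => ?_⟩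
  obtain hdim | hdim | hdim := dim_two_cases c
  · rw [← hy₁ c hc hdim]
    exact glue hdim fun d hd => if_pos hd
  · rw [← hy₂ c hc hdim]
    exact glue hdim fun d hd => if_neg (by omega)
  · rw [h₂ z (fun e he _ => hz e he) c hc hdim]
    refine Finset.sum_eq_zero fun d hd => ?_
    have := (mem_cofacets.1 hd).2
    have := dim_two_cases d
    omega

theorem Transverse.exists_edge_of_boundary_ne_zero (hAB : Transverse A B) (hA : IsPureComplex A)
    (hB : IsPureComplex B) {c₀ : Cell (Fin 2)} {ζ : Cell (Fin 2) → ZMod 2}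
    (hsupp : ∀ e, ζ e ≠ 0 → e ∈ linkedClass (A \ B) c₀ ∧ dim e = 1) {v : Cell (Fin 2)}
    (hv : v ∉ linkedClass (A \ B) c₀) (hne : boundary ζ v ≠ 0) :
    dim v = 0 ∧ ∃ b ∈ A ∩ B, v ≤ b ∧ dim b = 1 ∧ ∃ c ∈ linkedClass (A \ B) c₀, b ≤ c := by
  obtain ⟨e, hve, hζ⟩ := Finset.exists_ne_zero_of_sum_ne_zero hne
  obtain ⟨he, hdim⟩ := hsupp e hζ
  obtain ⟨hle, hdim'⟩ := mem_cofacets.1 hve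
  have hvA : v ∈ A := hA.isLowerSet hle he.1.1
  have hvB : v ∈ B := by_contra fun hvB => hv (mem_linkedClass_of_ge he ⟨hvA, hvB⟩ hle)
  have hv0 : dim v = 0 := by omega
  obtain ⟨i, j, hij, hei⟩ : ∃ i j, i ≠ j ∧ e = v.update i (e i) := by
    have := le_two.1 hle
    rw [dim_two] at hv0 hdim
    simp only [IsFace] at this
    obtain h | h : e 1 = v 1 ∨ e 0 = v 0 := by omega
    · exact ⟨0, 1, by decide, ext_two.2 ⟨rfl, h⟩⟩
    · exact ⟨1, 0, by decide, ext_two.2 ⟨h, rfl⟩⟩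
  obtain ⟨b, hvb, hodd, hmem, hmem'⟩ :=
    hAB.exists_update_mem_sdiff hA hB ⟨hvA, hvB⟩ hij (hei ▸ he.1) (hle i)
  rw [← hei] at hmem'
  have heb : e ≤ e.update j b := le_update <| by rwa [hei, update_of_ne hij.symm]
  refine ⟨hv0, v.update j b, hmem, le_update hvb, ?_, e.update j b,
    mem_linkedClass_of_le he hmem' heb, update_mono hle⟩
  have hvj : v j % 2 ≤ dim v :=
    Finset.single_le_sum (fun k _ => Int.emod_nonneg (v k) two_ne_zero) (Finset.mem_univ j)
  have := dim_update v j b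
  omega

namespace RegularSdiff

variable {c₀ : Cell (Fin 2)}

theorem exists_boundary_eq_at_vertices (hreg : RegularSdiff A B) (hA : IsPureComplex A)
    (hB : IsPureComplex B) (z : Cell (Fin 2) → ZMod 2) :
    ∃ y, ∀ v ∈ linkedClass (A \ B) c₀, dim v = 0 →
      boundary ((linkedClass (A \ B) c₀).indicator y) v = z v := by
  classical
  have path (v : Cell (Fin 2)) : ∃ δ ∈ edgeChains A, v ∈ A \ B → dim v = 0 →
      ∃ w ∈ A ∩ B, boundary δ = Pi.single v 1 + Pi.single w 1 := by
    by_cases hv : v ∈ A \ B ∧ dim v = 0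
    · obtain ⟨d, hd, hvd, b, hb, hbd⟩ := hreg.exists_le v hv.1
      obtain ⟨δ, hδ, heq⟩ : Homologous A v (bottom b) :=
        .of_linked hA.isLowerSet (hvd.mono sdiff_subset) hd.1 le_rfl ((bottom_le b).trans hbd)
          hv.2 (dim_bottom b)
      exact ⟨δ, hδ, fun _ _ => ⟨bottom b, ⟨hA.isLowerSet (bottom_le b) hb.1,
        hB.isLowerSet (bottom_le b) hb.2⟩, heq⟩⟩
    · exact ⟨0, zero_mem _, fun hvA hdim => (hv ⟨hvA, hdim⟩).elim⟩
  choose δ hδ hδ' using path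
  set V := (hA.finite.inter_of_left {v | v ∉ B ∧ dim v = 0}).toFinset
  have hy : (∑ v ∈ V, z v • δ v) ∈ edgeChains A :=
    sum_mem fun v _ => Submodule.smul_mem _ _ (hδ v)
  refine ⟨∑ v ∈ V, z v • δ v, fun c hc hdim => ?_⟩
  have hind : A.indicator (∑ v ∈ V, z v • δ v) = ∑ v ∈ V, z v • δ v :=
    indicator_eq_self.2 fun e he => by_contra fun heA => he (hy e fun h => heA h.1)
  rw [boundary_indicator_linkedClass hB.isLowerSet hc, hind, map_sum, Finset.sum_apply,
    Finset.sum_eq_single_of_mem c]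
  · obtain ⟨w, hw, heq⟩ := hδ' c hc.1 hdim
    have hcw : c ≠ w := fun h => hc.1.2 (h ▸ hw.2)
    rw [map_smul, heq, Pi.smul_apply, Pi.add_apply, Pi.single_eq_same, Pi.single_eq_of_ne hcw,
      add_zero, smul_eq_mul, mul_one]
  · exact (Set.Finite.mem_toFinset _).2 ⟨hc.1.1, hc.1.2, hdim⟩
  · intro v hv hvc
    obtain ⟨hvA, hvB, hv0⟩ := (Set.Finite.mem_toFinset _).1 hv
    obtain ⟨w, hw, heq⟩ := hδ' v ⟨hvA, hvB⟩ hv0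
    have hcw : c ≠ w := fun h => hc.1.2 (h ▸ hw.2)
    rw [map_smul, heq, Pi.smul_apply, Pi.add_apply, Pi.single_eq_of_ne hvc.symm,
      Pi.single_eq_of_ne hcw, add_zero, smul_zero]

theorem eq_zero_at_faces (hreg : RegularSdiff A B) (hA : IsPureComplex A) (hB : IsPureComplex B)
    {z : Cell (Fin 2) → ZMod 2}
    (hz : ∀ e ∈ linkedClass (A \ B) c₀, dim e = 1 →
      boundary ((linkedClass (A \ B) c₀).indicator z) e = 0)
    {f : Cell (Fin 2)} (hf : f ∈ linkedClass (A \ B) c₀) (hdim : dim f = 2) : z f = 0 := by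
  set S := linkedClass (A \ B) c₀
  have hcycle (e : Cell (Fin 2)) (heB : e ∉ B) (he : dim e = 1) :
      boundary (S.indicator z) e = 0 := by
    by_cases heS : e ∈ S
    · exact hz e heS he
    refine Finset.sum_eq_zero fun d hd => indicator_of_notMem (fun hdS => heS ?_) z
    have hed := le_of_mem_cofacets hd
    exact mem_linkedClass_of_ge hdS ⟨hA.isLowerSet hed hdS.1.1, heB⟩ hed
  -- The relative cycle is constant along `Bᶜ`, where `f` is linked to a face outside `A`.
  obtain ⟨d, hd, hfd, b, hb, hdb⟩ := hreg.exists_ge f hf.1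
  have htop : top b ∉ S := fun h => hb.1 (hA.isLowerSet (le_top b) h.1.1)
  calc z f = S.indicator z f := (indicator_of_mem hf z).symm
    _ = S.indicator z (top b) :=
        eq_of_le_faces_of_linked hB.isLowerSet.compl
          (fun e heB he f hf g hg => eq_of_boundary_eq_zero he (hcycle e heB he) hf hg)
          (hfd.mono fun _ h => h.2) hd.2 le_rfl (hdb.trans (le_top b)) hdim (dim_top b)
    _ = 0 := indicator_of_notMem htop z

theorem boundary_mem_map_edgeChains_inter (hreg : RegularSdiff A B) (hA : IsPureComplex A)
    (hB : IsPureComplex B) (hAB : Transverse A B) {ζ : Cell (Fin 2) → ZMod 2}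
    (hsupp : ∀ e, ζ e ≠ 0 → e ∈ linkedClass (A \ B) c₀ ∧ dim e = 1)
    (hζ : ∀ v ∈ linkedClass (A \ B) c₀, boundary ζ v = 0) :
    boundary ζ ∈ (edgeChains (A ∩ B)).map boundary := by
  set E := (hA.finite.inter_of_left {e | dim e = 1}).toFinset
  have hE (e : Cell (Fin 2)) : e ∈ E ↔ e ∈ A ∧ dim e = 1 := Set.Finite.mem_toFinset _
  refine boundary_mem_map_edgeChains (E := E)
    (fun e he => (hE e).2 ⟨(hsupp e he).1.1.1, (hsupp e he).2⟩) (fun e he => ((hE e).1 he).2)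
    fun v w hv hw => ?_
  obtain ⟨hv0, b, hb, hvb, hdim, c, hc, hbc⟩ :=
    hAB.exists_edge_of_boundary_ne_zero hA hB hsupp (fun h => hv (hζ v h)) hv
  obtain ⟨hw0, b', hb', hwb, hdim', c', hc', hbc'⟩ :=
    hAB.exists_edge_of_boundary_ne_zero hA hB hsupp (fun h => hw (hζ w h)) hw
  exact .of_linked (hA.isLowerSet.inter hB.isLowerSet)
    (hreg.linked_lower c hc.1 c' hc'.1 (linked_of_mem_linkedClass hc hc') b hb hbc
      (by omega) b' hb' hbc' (by omega)) hb' hvb hwb hv0 hw0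

theorem exists_boundary_eq_and_eq_zero (hreg : RegularSdiff A B) (hA : IsPureComplex A)
    (hB : IsPureComplex B) {Z : Cell (Fin 2) → ZMod 2} (hZ : Z ∈ edgeChains A)
    (hcycle : boundary Z = 0) :
    ∃ y, (∀ e, dim e = 1 → boundary y e = Z e) ∧
      ∀ e ∈ linkedClass (A \ B) c₀, dim e = 1 →
        ∀ f ∈ cofacets e, f ∉ linkedClass (A \ B) c₀ → y f = 0 := by
  set S := linkedClass (A \ B) c₀
  set E := (hA.finite.inter_of_left {e | dim e = 1}).toFinset
  have hE (e : Cell (Fin 2)) : e ∈ E ↔ e ∈ A ∧ dim e = 1 := Set.Finite.mem_toFinset _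
  obtain ⟨D, hD⟩ := exists_boundary_eq (E := E)
    (fun e he => (hE e).2 (by_contra fun h => he (hZ e h))) (fun e he => ((hE e).1 he).2) hcycle
  by_cases hout : ∃ e₀ ∈ S, dim e₀ = 1 ∧ ∃ f₀ ∈ cofacets e₀, f₀ ∉ S
  swap
  · exact ⟨D, hD, fun e he hdim f hf hfS => (hout ⟨e, he, hdim, f, hf, hfS⟩).elim⟩
  obtain ⟨e₀, he₀, hdim₀, f₀, hf₀, hf₀S⟩ := hout
  have outside {e f : Cell (Fin 2)} (he : e ∈ S) (hf : f ∈ cofacets e) (hfS : f ∉ S) :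
      f ∈ Aᶜ ∩ Bᶜ := by
    have hef := le_of_mem_cofacets hf
    have hfB : f ∉ B := fun h => he.1.2 (hB.isLowerSet hef h)
    exact ⟨fun hfA => hfS (mem_linkedClass_of_le he ⟨hfA, hfB⟩ hef), hfB⟩
  -- `D` takes a single value on the outer side of `S`, which a constant chain cancels.
  refine ⟨D + fun _ => D f₀, fun e hdim => ?_, fun e he hdim f hf hfS => ?_⟩
  · rw [map_add, Pi.add_apply, boundary_const hdim, add_zero, hD e hdim]
  · obtain ⟨hef, hdim_f⟩ := mem_cofacets.1 hf
    obtain ⟨hef₀, hdim_f₀⟩ := mem_cofacets.1 hf₀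
    have hlinked := hreg.linked_upper e he.1 e₀ he₀.1 (linked_of_mem_linkedClass he he₀)
      f (outside he hf hfS) hef (by omega) f₀ (outside he₀ hf₀ hf₀S) hef₀ (by omega)
    have hconst : D f = D f₀ :=
      eq_of_le_faces_of_linked (hA.isLowerSet.compl.inter hB.isLowerSet.compl)
        (fun e' he' hdim' _ hf _ hg => eq_of_boundary_eq_zero hdim'
          ((hD e' hdim').trans (hZ e' fun h => he'.1 h.1)) hf hg)
        hlinked (outside he₀ hf₀ hf₀S) le_rfl le_rfl (by omega) (by omega)
    rw [Pi.add_apply, hconst, CharTwo.add_self_eq_zero]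

theorem exists_boundary_eq_at_edges (hreg : RegularSdiff A B) (hA : IsPureComplex A)
    (hB : IsPureComplex B) (hAB : Transverse A B) {z : Cell (Fin 2) → ZMod 2}
    (hz : ∀ v ∈ linkedClass (A \ B) c₀, dim v = 0 →
      boundary ((linkedClass (A \ B) c₀).indicator z) v = 0) :
    ∃ y, ∀ e ∈ linkedClass (A \ B) c₀, dim e = 1 →
      boundary ((linkedClass (A \ B) c₀).indicator y) e = z e := by
  set S := linkedClass (A \ B) c₀
  set ζ : Cell (Fin 2) → ZMod 2 := {e | dim e = 1}.indicator (S.indicator z)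
  have hζ_eq (e : Cell (Fin 2)) (hdim : dim e = 1) : ζ e = S.indicator z e :=
    indicator_of_mem (s := {e | dim e = 1}) hdim _
  have hζS (e : Cell (Fin 2)) (he : ζ e ≠ 0) : e ∈ S ∧ dim e = 1 := by
    have hdim : dim e = 1 := mem_of_indicator_ne_zero (s := {e | dim e = 1}) he
    rw [hζ_eq e hdim] at he
    exact ⟨mem_of_indicator_ne_zero he, hdim⟩
  have hζ_boundary (v : Cell (Fin 2)) (hv : v ∈ S) : boundary ζ v = 0 := by
    by_cases hdim : dim v = 0
    · rw [← hz v hv hdim]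
      refine boundary_congr fun d hd => ?_
      exact hζ_eq d (by rw [(mem_cofacets.1 hd).2, hdim, zero_add])
    · refine Finset.sum_eq_zero fun d hd => by_contra fun hne => ?_
      have := (hζS d hne).2
      have := (mem_cofacets.1 hd).2
      omega
  obtain ⟨δ, hδ, hδζ⟩ := hreg.boundary_mem_map_edgeChains_inter hA hB hAB hζS hζ_boundary
  obtain ⟨y, hy, hout⟩ := hreg.exists_boundary_eq_and_eq_zero (c₀ := c₀) hA hB (Z := ζ + δ)
    (add_mem (fun e he => by_contra fun h => he ⟨(hζS e h).1.1.1, (hζS e h).2⟩)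
      fun e he => hδ e fun h => he ⟨h.1.1, h.2⟩)
    (by rw [map_add, hδζ, ZModModule.add_self])
  refine ⟨y, fun e he hdim => ?_⟩
  have hrestrict : boundary (S.indicator y) e = boundary y e := boundary_congr fun f hf => by
    by_cases hfS : f ∈ S
    · exact indicator_of_mem hfS y
    · rw [indicator_of_notMem hfS, hout e he hdim f hf hfS]
  rw [hrestrict, hy e hdim, Pi.add_apply, hδ e fun h => he.1.2 h.1.2, add_zero,
    hζ_eq e hdim, indicator_of_mem he]

theorem acyclic_sdiff (hreg : RegularSdiff A B) (hA : IsPureComplex A) (hB : IsPureComplex B)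
    (hAB : Transverse A B) : Acyclic (A \ B) :=
  .of_linkedClass fun _ _ => .of_dim_cases (hreg.exists_boundary_eq_at_vertices hA hB)
    (fun _ hz => hreg.exists_boundary_eq_at_edges hA hB hAB hz)
    fun _ hz _ hf hdim => hreg.eq_zero_at_faces hA hB hz hf hdim

end RegularSdiff

theorem RegularSdiff.acyclic_union_sdiff_inter (hreg : RegularSdiff A B) (hreg' : RegularSdiff B A)
    (hA : IsPureComplex A) (hB : IsPureComplex B) (hAB : Transverse A B) :
    Acyclic ((A ∪ B) \ (A ∩ B)) := by
  refine .of_fibers (· ∈ A) (fun c hc d hd hcd => propext ⟨fun hcA => ?_, hA.isLowerSet hcd⟩)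
    fun c _ => ?_
  · by_contra hdA
    exact hc.2 ⟨hcA, hB.isLowerSet hcd (hd.1.resolve_left hdA)⟩
  · by_cases hcA : c ∈ A
    · convert hreg.acyclic_sdiff hA hB hAB using 1
      grind
    · convert hreg'.acyclic_sdiff hB hA hAB.symm using 1
      grind

end RegularSdiff

end Cell

open Cell

open scoped Topology

/-- Nodes cutting the line into points and open intervals. Their powers cut `ι → ℝ` into the cells
of a rectangular grid. -/
structure Grid where
  node : ℤ → ℝ
  strictMono : StrictMono node
  exists_mem_Ico : ∀ t, ∃ i, t ∈ Ico (node i) (node (i + 1))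

namespace Grid

variable (g : Grid) {ι : Type*}

/-- The cell of the line containing `t`: `2 * i` if `t` is the node `i`, and `2 * i + 1` if `t` is
strictly between the nodes `i` and `i + 1`. -/
def index (t : ℝ) : ℤ :=
  open scoped Classical in
  let i := (g.exists_mem_Ico t).choose
  if t = g.node i then 2 * i else 2 * i + 1

variable {g} {t : ℝ} {i : ℤ}

theorem index_le_two_mul_iff : g.index t ≤ 2 * i ↔ t ≤ g.node i := by
  have hIco := (g.exists_mem_Ico t).choose_spec
  rw [index]
  set j := (g.exists_mem_Ico t).choose
  split_ifs with hj
  · rw [hj, g.strictMono.le_iff_le]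
    omega
  · have : 2 * j + 1 ≤ 2 * i ↔ j + 1 ≤ i := by omega
    rw [this, ← g.strictMono.le_iff_le]
    refine ⟨hIco.2.le.trans, fun h => ?_⟩
    have := lt_of_le_of_ne hIco.1 (Ne.symm hj)
    exact g.strictMono.monotone (g.strictMono.lt_iff_lt.1 (this.trans_le h))

theorem two_mul_le_index_iff : 2 * i ≤ g.index t ↔ g.node i ≤ t := by
  have hIco := (g.exists_mem_Ico t).choose_spec
  rw [index]
  set j := (g.exists_mem_Ico t).choose
  split_ifs with hj
  · rw [hj, g.strictMono.le_iff_le]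
    omega
  · have : 2 * i ≤ 2 * j + 1 ↔ i < j + 1 := by omega
    rw [this, ← g.strictMono.lt_iff_lt]
    refine ⟨fun h => ?_, fun h => h.trans_lt hIco.2⟩
    exact (g.strictMono.monotone (Int.lt_add_one_iff.1 (g.strictMono.lt_iff_lt.1 h))).trans hIco.1

theorem index_eq_two_mul_iff : g.index t = 2 * i ↔ t = g.node i := by
  rw [le_antisymm_iff, index_le_two_mul_iff, two_mul_le_index_iff, le_antisymm_iff]

theorem index_eq_two_mul_add_one_iff :
    g.index t = 2 * i + 1 ↔ t ∈ Ioo (g.node i) (g.node (i + 1)) := by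
  rw [mem_Ioo, ← not_le, ← not_le, ← index_le_two_mul_iff, ← two_mul_le_index_iff]
  omega

variable (g)

theorem index_mono : Monotone g.index := fun s t hst => by
  have upper (i : ℤ) (hi : g.index t ≤ 2 * i) : g.index s ≤ 2 * i :=
    index_le_two_mul_iff.2 (hst.trans (index_le_two_mul_iff.1 hi))
  have lower (i : ℤ) (hi : 2 * i ≤ g.index s) : 2 * i ≤ g.index t :=
    two_mul_le_index_iff.2 ((two_mul_le_index_iff.1 hi).trans hst)
  have := upper ((g.index t + 1) / 2)
  have := lower ((g.index t + 1) / 2)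
  omega

theorem index_surjective : Function.Surjective g.index := fun m => by
  obtain ⟨i, rfl | rfl⟩ := Int.even_or_odd' m
  · exact ⟨g.node i, index_eq_two_mul_iff.2 rfl⟩
  · obtain ⟨t, ht⟩ := exists_between (g.strictMono (Int.lt_succ i))
    exact ⟨t, index_eq_two_mul_add_one_iff.2 ht⟩

theorem eventually_isFace_index (t : ℝ) : ∀ᶠ s in 𝓝 t, IsFace (g.index t) (g.index s) := by
  have below (i : ℤ) (h : 2 * i < g.index t) : ∀ᶠ s in 𝓝 t, 2 * i < g.index s := by
    rw [← not_le, index_le_two_mul_iff, not_le] at h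
    filter_upwards [lt_mem_nhds h] with s hs
    rwa [← not_le, index_le_two_mul_iff, not_le]
  have above (i : ℤ) (h : g.index t < 2 * i) : ∀ᶠ s in 𝓝 t, g.index s < 2 * i := by
    rw [← not_le, two_mul_le_index_iff, not_le] at h
    filter_upwards [gt_mem_nhds h] with s hs
    rwa [← not_le, two_mul_le_index_iff, not_le]
  filter_upwards [below ((g.index t - 1) / 2) (by omega), above (g.index t / 2 + 1) (by omega)]
    with s hs hs'
  simp only [IsFace]
  omega

theorem mem_closure_index_preimage {m : ℤ} (h : IsFace (g.index t) m) :
    t ∈ closure (g.index ⁻¹' {m}) := by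
  obtain rfl | ⟨heven, hm⟩ := h
  · exact subset_closure rfl
  obtain ⟨i, hi⟩ : ∃ i, m = 2 * i + 1 := ⟨m / 2, by omega⟩
  have hIoo : g.index ⁻¹' {m} = Ioo (g.node i) (g.node (i + 1)) :=
    ext fun s => hi ▸ index_eq_two_mul_add_one_iff
  have hlt := g.strictMono (Int.lt_succ i)
  rw [hIoo, closure_Ioo hlt.ne]
  obtain h | h : g.index t = 2 * i ∨ g.index t = 2 * (i + 1) := by omega
  · rw [index_eq_two_mul_iff.1 h]
    exact left_mem_Icc.2 hlt.le
  · rw [index_eq_two_mul_iff.1 h]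
    exact right_mem_Icc.2 hlt.le

/-- The cell of the grid containing the point `x`. -/
def cellOf (x : ι → ℝ) : Cell ι := ⟨fun i => g.index (x i)⟩

theorem cellOf_surjective : Function.Surjective (g.cellOf (ι := ι)) := fun c => by
  choose x hx using fun i => g.index_surjective (c i)
  exact ⟨x, Cell.ext (funext hx)⟩

/-- The union of the cells in `S`, as a subset of `ι → ℝ`. -/
def region (S : Set (Cell ι)) : Set (ι → ℝ) := g.cellOf ⁻¹' S

variable {S T : Set (Cell ι)} {x y : ι → ℝ}

theorem mem_region : x ∈ g.region S ↔ g.cellOf x ∈ S := Iff.rfl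

theorem region_inter : g.region (S ∩ T) = g.region S ∩ g.region T := rfl

theorem region_singleton (c : Cell ι) :
    g.region {c} = pi univ fun i => g.index ⁻¹' {c i} :=
  ext fun _ => Cell.ext_iff.trans <| funext_iff.trans <| by simp only [mem_univ_pi]; rfl

theorem closure_region_singleton_subset {c d : Cell ι} (h : c ≤ d) :
    g.region {c} ⊆ closure (g.region {d}) := by
  rintro x rfl
  rw [region_singleton, closure_pi_set]
  exact fun i _ => g.mem_closure_index_preimage (h i)

theorem infinite_region_singleton [Fintype ι] {c : Cell ι} (h : 0 < dim c) :
    (g.region {c}).Infinite := by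
  classical
  obtain ⟨x, rfl⟩ := g.cellOf_surjective c
  obtain ⟨i, -, hi⟩ := Finset.exists_ne_zero_of_sum_ne_zero h.ne'
  obtain ⟨j, hj⟩ : ∃ j, g.index (x i) = 2 * j + 1 := by
    have : g.index (x i) % 2 ≠ 0 := hi
    exact ⟨g.index (x i) / 2, by omega⟩
  refine infinite_of_injOn_mapsTo (f := Function.update x i)
    ((Function.update_injective x i).injOn) (fun t ht => ?_)
    (Ioo_infinite (g.strictMono (Int.lt_succ j)))
  refine Cell.ext (funext fun k => ?_)
  obtain rfl | hk := eq_or_ne k i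
  · exact (congrArg g.index (Function.update_self ..)).trans
      ((index_eq_two_mul_add_one_iff.2 ht).trans hj.symm)
  · exact congrArg g.index (Function.update_of_ne hk ..)

theorem subsingleton_region_singleton [Fintype ι] {c : Cell ι} (h : dim c = 0) :
    (g.region {c}).Subsingleton := by
  have heven := (Finset.sum_eq_zero_iff_of_nonneg fun i _ => Int.emod_nonneg _ two_ne_zero).1 h
  refine fun x hx y hy => funext fun i => ?_
  have hi : 2 * (c i / 2) = c i := by
    have := heven i (Finset.mem_univ i)
    omega
  have hcoord {x : ι → ℝ} (hx : x ∈ g.region {c}) : x i = g.node (c i / 2) :=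
    index_eq_two_mul_iff.1 ((congrArg (· i) hx).trans hi.symm)
  rw [hcoord hx, hcoord hy]

theorem exists_dim_pos_of_infinite [Fintype ι] {X : Set (ι → ℝ)} (hX : X.Infinite)
    (hXS : X ⊆ g.region S) (hS : S.Finite) : ∃ x ∈ X, 0 < dim (g.cellOf x) := by
  by_contra! hdim
  refine hX (((hS.inter_of_left {c | dim c = 0}).biUnion fun c hc =>
    (g.subsingleton_region_singleton hc.2).finite).subset fun x hx => ?_)
  exact mem_biUnion ⟨hXS hx, (hdim x hx).antisymm (dim_nonneg _)⟩ rfl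

theorem convex_region_setOf_forall_mem {s : ι → Set ℤ} (hs : ∀ i, (s i).OrdConnected) :
    Convex ℝ (g.region {c : Cell ι | ∀ i, c i ∈ s i}) := by
  have : g.region {c : Cell ι | ∀ i, c i ∈ s i} = pi univ fun i => g.index ⁻¹' s i :=
    ext fun _ => by simp only [mem_univ_pi]; rfl
  rw [this]
  exact convex_pi fun i _ => ((hs i).preimage_mono g.index_mono).convex

theorem convex_region_Iic (c : Cell ι) : Convex ℝ (g.region (Iic c)) :=
  g.convex_region_setOf_forall_mem (s := fun i => {k | IsFace k (c i)}) fun i =>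
    ⟨fun k hk l hl m hm => by
      simp only [IsFace, mem_Icc, mem_ofPred_eq] at *
      omega⟩

theorem convex_region_Icc (c d : Cell ι) : Convex ℝ (g.region (Icc c d)) := by
  rw [← Ici_inter_Iic, region_inter]
  exact (g.convex_region_setOf_forall_mem (s := fun i => {k | IsFace (c i) k}) fun i =>
    ⟨fun k hk l hl m hm => by
      simp only [IsFace, mem_Icc, mem_ofPred_eq] at *
      omega⟩).inter (g.convex_region_Iic d)

theorem connectedComponentIn_eq_of_le (hS : S.OrdConnected) (hx : x ∈ g.region S)
    (hy : y ∈ g.region S) (hxy : g.cellOf x ≤ g.cellOf y) :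
    connectedComponentIn (g.region S) x = connectedComponentIn (g.region S) y := by
  refine connectedComponentIn_eq <| (g.convex_region_Icc _ _).isPreconnected
    |>.subset_connectedComponentIn (left_mem_Icc.2 hxy) (fun z hz => ?_) (right_mem_Icc.2 hxy)
  exact hS.out hx hy hz

theorem connectedComponentIn_eq_of_linked (hS : S.OrdConnected) (hx : x ∈ g.region S)
    (hxy : Linked S (g.cellOf x) (g.cellOf y)) :
    connectedComponentIn (g.region S) x = connectedComponentIn (g.region S) y := by
  have hpoint := Function.surjInv_eq (g.cellOf_surjective (ι := ι))
  set point := Function.surjInv (g.cellOf_surjective (ι := ι))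
  have hmem {c : Cell ι} (hc : c ∈ S) : point c ∈ g.region S := by rwa [mem_region, hpoint]
  have hcell {x : ι → ℝ} (hx : x ∈ g.region S) :=
    g.connectedComponentIn_eq_of_le hS (hmem hx) hx (hpoint _).le
  calc connectedComponentIn (g.region S) x
      = connectedComponentIn (g.region S) (point (g.cellOf x)) := (hcell hx).symm
    _ = connectedComponentIn (g.region S) (point (g.cellOf y)) :=
        hxy.eq_of_forall_le (φ := fun c => connectedComponentIn (g.region S) (point c))
          fun a ha b hb hab => g.connectedComponentIn_eq_of_le hS (hmem ha) (hmem hb)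
            (by rwa [hpoint, hpoint])
    _ = connectedComponentIn (g.region S) y := hcell (hxy.mem_iff.1 hx)

variable [Finite ι]

theorem eventually_cellOf_le (x : ι → ℝ) : ∀ᶠ y in 𝓝 x, g.cellOf x ≤ g.cellOf y :=
  Filter.eventually_all.2 fun i =>
    (continuous_apply i).tendsto x |>.eventually (g.eventually_isFace_index (x i))

theorem isOpen_region (hS : IsUpperSet S) : IsOpen (g.region S) :=
  isOpen_iff_mem_nhds.2 fun x hx => by
    filter_upwards [g.eventually_cellOf_le x] with y hy using hS hy hx

theorem isClosed_region (hS : IsLowerSet S) : IsClosed (g.region S) :=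
  ⟨g.isOpen_region hS.compl⟩

theorem exists_cellOf_le_of_mem_closure {X : Set (ι → ℝ)} (hx : x ∈ closure X) :
    ∃ y ∈ X, g.cellOf x ≤ g.cellOf y := by
  obtain ⟨y, hxy, hy⟩ := mem_closure_iff_nhds.1 hx _ (g.eventually_cellOf_le x)
  exact ⟨y, hy, hxy⟩

theorem linked_of_isPreconnected {X : Set (ι → ℝ)} (hX : IsPreconnected X)
    (hXS : X ⊆ g.region S) (hx : x ∈ X) (hy : y ∈ X) : Linked S (g.cellOf x) (g.cellOf y) := by
  refine hX.induction₂ (fun x y => Linked S (g.cellOf x) (g.cellOf y)) (fun x hx => ?_)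
    (fun _ _ _ _ _ _ => .trans) (fun _ _ _ _ => .symm) hx hy
  filter_upwards [nhdsWithin_le_nhds (g.eventually_cellOf_le x), self_mem_nhdsWithin] with y hxy hy
  exact .of_le (hXS hx) (hXS hy) hxy

end Grid

section RegularPair

theorem SharesEdge.symm {C D : Set Plane} (h : SharesEdge C D) : SharesEdge D C := by
  rwa [SharesEdge, inter_comm]

/-- Every component of `X \ Y` shares a boundary edge with exactly one component of `X ∩ Y` and
with exactly one component of the complement of `X ∪ Y`. -/
def RegularPair (X Y : Set Plane) : Prop :=
  ∀ C, IsCompOf C (X \ Y) →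
    (∃! T, IsCompOf T (X ∩ Y) ∧ SharesEdge T C) ∧ ∃! T, IsCompOf T (Xᶜ ∩ Yᶜ) ∧ SharesEdge T C

namespace Grid

variable (g : Grid) {A B S T : Set (Cell (Fin 2))} {x y : Plane}

theorem sharesEdge_of_le (hS : S.OrdConnected) (hT : T.OrdConnected) (hx : x ∈ g.region S)
    (hy : y ∈ g.region T) (hxy : g.cellOf x ≤ g.cellOf y) (hdim : 0 < dim (g.cellOf x)) :
    SharesEdge (connectedComponentIn (g.region S) x) (connectedComponentIn (g.region T) y) := by
  have hcell {S : Set (Cell (Fin 2))} {x : Plane} (hS : S.OrdConnected) (hx : x ∈ g.region S) :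
      g.region {g.cellOf x} ⊆ connectedComponentIn (g.region S) x := fun z hz => by
    have hzx : g.cellOf z = g.cellOf x := hz
    have hzS : z ∈ g.region S := by rwa [mem_region, hzx]
    rw [g.connectedComponentIn_eq_of_le hS hx hzS hzx.ge]
    exact mem_connectedComponentIn hzS
  exact (g.infinite_region_singleton hdim).mono <| subset_inter
    ((hcell hS hx).trans subset_closure)
    ((g.closure_region_singleton_subset hxy).trans (closure_mono (hcell hT hy)))

theorem linked_of_existsUnique {C : Set Plane}
    (h : ∃! T, IsCompOf T (g.region S) ∧ SharesEdge T C) (hx : x ∈ g.region S)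
    (hy : y ∈ g.region S) (hxC : SharesEdge (connectedComponentIn (g.region S) x) C)
    (hyC : SharesEdge (connectedComponentIn (g.region S) y) C) :
    Linked S (g.cellOf x) (g.cellOf y) := by
  have heq := h.unique ⟨⟨x, hx, rfl⟩, hxC⟩ ⟨⟨y, hy, rfl⟩, hyC⟩
  exact g.linked_of_isPreconnected isPreconnected_connectedComponentIn
    (connectedComponentIn_subset _ _) (mem_connectedComponentIn hx)
    (heq ▸ mem_connectedComponentIn hy)

theorem exists_linked_of_mem_closure {p : Plane} (hx : x ∈ g.region S)
    (hp : p ∈ closure (connectedComponentIn (g.region S) x)) :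
    ∃ d ∈ S, Linked S (g.cellOf x) d ∧ g.cellOf p ≤ d := by
  obtain ⟨y, hy, hpy⟩ := g.exists_cellOf_le_of_mem_closure hp
  have hsub := connectedComponentIn_subset (g.region S) x
  exact ⟨g.cellOf y, hsub hy, g.linked_of_isPreconnected isPreconnected_connectedComponentIn hsub
    (mem_connectedComponentIn hx) hy, hpy⟩

theorem exists_linked_ge_of_regularPair (hA : IsLowerSet A) (hB : IsLowerSet B)
    (hreg : RegularPair (g.region A) (g.region B)) {c : Cell (Fin 2)} (hc : c ∈ A \ B) :
    ∃ d ∈ A \ B, Linked (A \ B) c d ∧ ∃ b ∈ A ∩ B, b ≤ d := by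
  obtain ⟨x, rfl⟩ := g.cellOf_surjective c
  obtain ⟨-, ⟨⟨t, _, rfl⟩, hshare⟩, -⟩ := (hreg _ ⟨x, hc, rfl⟩).1
  obtain ⟨p, hpT, hpC⟩ := hshare.nonempty
  obtain ⟨d, hd, hxd, hpd⟩ := g.exists_linked_of_mem_closure (S := A \ B) hc hpC
  refine ⟨d, hd, hxd, g.cellOf p, ?_, hpd⟩
  have hsub : closure (connectedComponentIn (g.region (A ∩ B)) t) ⊆ g.region (A ∩ B) :=
    closure_minimal (connectedComponentIn_subset _ _) (g.isClosed_region (hA.inter hB))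
  exact hsub hpT

theorem exists_linked_le_of_regularPair (hA : IsPureComplex A) (hAB : Transverse A B)
    (hreg : RegularPair (g.region A) (g.region B)) {c : Cell (Fin 2)} (hc : c ∈ A \ B) :
    ∃ d ∈ A \ B, Linked (A \ B) c d ∧ ∃ b ∈ Aᶜ ∩ Bᶜ, d ≤ b := by
  obtain ⟨x, rfl⟩ := g.cellOf_surjective c
  obtain ⟨-, ⟨⟨t, ht, rfl⟩, hshare⟩, -⟩ := (hreg _ ⟨x, hc, rfl⟩).2
  have hsub : closure (connectedComponentIn (g.region (A \ B)) x) ⊆ g.region A :=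
    closure_minimal ((connectedComponentIn_subset _ _).trans sdiff_subset)
      (g.isClosed_region hA.isLowerSet)
  obtain ⟨p, ⟨hpT, hpC⟩, hdim⟩ :=
    g.exists_dim_pos_of_infinite hshare (inter_subset_right.trans hsub) hA.finite
  obtain ⟨b, hb, -, hpb⟩ := g.exists_linked_of_mem_closure (S := Aᶜ ∩ Bᶜ) ht hpT
  obtain ⟨d, hd, hxd, hpd⟩ := g.exists_linked_of_mem_closure (S := A \ B) hc hpC
  have hpA : g.cellOf p ∈ A := hA.isLowerSet hpd hd.1
  have hp : g.cellOf p ∈ A \ B := ⟨hpA, fun hpB =>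
    hdim.ne' (hAB.dim_eq_zero ⟨hpA, hpB⟩ hpb fun h => h.elim hb.1 hb.2)⟩
  exact ⟨g.cellOf p, hp, hxd.trans (Linked.of_le hp hd hpd).symm, b, hb, hpb⟩

theorem cellRegular_of_regularPair (hA : IsPureComplex A) (hB : IsPureComplex B)
    (hAB : Transverse A B) (hreg : RegularPair (g.region A) (g.region B)) : RegularSdiff A B := by
  have hocD : (A \ B).OrdConnected :=
    hA.isLowerSet.ordConnected.inter hB.isLowerSet.compl.ordConnected
  have hocT : (A ∩ B).OrdConnected := (hA.isLowerSet.inter hB.isLowerSet).ordConnected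
  have hocN : (Aᶜ ∩ Bᶜ).OrdConnected :=
    (hA.isLowerSet.compl.inter hB.isLowerSet.compl).ordConnected
  have hregC (x : Plane) (hx : x ∈ g.region (A \ B)) :
      (∃! T, IsCompOf T (g.region (A ∩ B)) ∧
        SharesEdge T (connectedComponentIn (g.region (A \ B)) x)) ∧
      ∃! T, IsCompOf T (g.region (Aᶜ ∩ Bᶜ)) ∧
        SharesEdge T (connectedComponentIn (g.region (A \ B)) x) := hreg _ ⟨x, hx, rfl⟩
  refine ⟨fun _ => g.exists_linked_ge_of_regularPair hA.isLowerSet hB.isLowerSet hreg,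
    fun _ => g.exists_linked_le_of_regularPair hA hAB hreg, ?_, ?_⟩ <;>
    simp only [g.cellOf_surjective.forall]
  · intro x hx x' hx' hxx' y hy hyx hdim y' hy' hyx' hdim'
    have hshare' := g.sharesEdge_of_le hocT hocD hy' hx' hyx' hdim'
    rw [← g.connectedComponentIn_eq_of_linked hocD hx hxx'] at hshare'
    exact g.linked_of_existsUnique (hregC x hx).1 hy hy'
      (g.sharesEdge_of_le hocT hocD hy hx hyx hdim) hshare'
  · intro x hx x' hx' hxx' y hy hxy hdim y' hy' hxy' hdim'
    have hshare' := (g.sharesEdge_of_le hocD hocN hx' hy' hxy' hdim').symm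
    rw [← g.connectedComponentIn_eq_of_linked hocD hx hxx'] at hshare'
    exact g.linked_of_existsUnique (hregC x hx).2 hy hy'
      (g.sharesEdge_of_le hocD hocN hx hy hxy hdim).symm hshare'

end Grid

end RegularPair

section InclusionHomotopyEquiv

/-- The inclusion of `Y` into `X` is a homotopy equivalence. -/
def IsInclusionHomotopyEquiv {E : Type*} [TopologicalSpace E] (Y X : Set E) : Prop :=
  ∃ e : ContinuousMap.HomotopyEquiv Y X, ∀ y : Y, (e.toFun y : E) = y

namespace IsInclusionHomotopyEquiv

variable {E : Type*} [TopologicalSpace E] {X Y Z R : Set E}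

theorem refl (X : Set E) : IsInclusionHomotopyEquiv X X :=
  ⟨ContinuousMap.HomotopyEquiv.refl X, fun _ => rfl⟩

theorem trans (hZY : IsInclusionHomotopyEquiv Z Y) (hYX : IsInclusionHomotopyEquiv Y X) :
    IsInclusionHomotopyEquiv Z X := by
  obtain ⟨e, he⟩ := hZY
  obtain ⟨e', he'⟩ := hYX
  exact ⟨e.trans e', fun z => (he' _).trans (he z)⟩

variable [AddCommGroup E] [Module ℝ E] [IsTopologicalAddGroup E] [ContinuousSMul ℝ E]

theorem of_segment_subset {r : E → E} (hYX : Y ⊆ X) (hr : ContinuousOn r X) (hmaps : MapsTo r X Y)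
    (hid : EqOn r id Y) (hseg : ∀ x ∈ X, segment ℝ x (r x) ⊆ X) : IsInclusionHomotopyEquiv Y X := by
  have hrX : Continuous (X.domRestrict r) := hr.domRestrict
  let inclusion : C(Y, X) := ⟨Set.inclusion hYX, continuous_inclusion hYX⟩
  let retraction : C(X, Y) := ⟨fun x => ⟨r x, hmaps x.2⟩, hrX.subtype_mk _⟩
  have hleft : retraction.comp inclusion = .id Y :=
    ContinuousMap.ext fun y => Subtype.ext (hid y.2)
  let homotopy : (ContinuousMap.id X).Homotopy (inclusion.comp retraction) :=
    { toFun p := ⟨AffineMap.lineMap (p.2 : E) (r p.2) (p.1 : ℝ),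
        hseg _ p.2.2 (lineMap_mem_segment ℝ _ _ p.1.2)⟩
      continuous_toFun := by
        refine Continuous.subtype_mk ?_ _
        have hr : Continuous fun p : unitInterval × X => r p.2 := hrX.comp continuous_snd
        have hid : Continuous fun p : unitInterval × X => (p.2 : E) := by fun_prop
        have ht : Continuous fun p : unitInterval × X => (p.1 : ℝ) := by fun_prop
        simp only [AffineMap.lineMap_apply_module]
        exact ((continuous_const.sub ht).smul hid).add (ht.smul hr)
      map_zero_left x := Subtype.ext (AffineMap.lineMap_apply_zero _ _)
      map_one_left x := Subtype.ext (AffineMap.lineMap_apply_one _ _) }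
  exact ⟨⟨inclusion, retraction, hleft ▸ .refl _, ⟨homotopy.symm⟩⟩, fun _ => rfl⟩

theorem union_of_retraction {r : E → E} (hY : IsClosed Y) (hR : IsClosed R) (hconv : Convex ℝ R)
    (hr : ContinuousOn r R) (hmaps : MapsTo r R (R ∩ Y)) (hid : EqOn r id (R ∩ Y)) :
    IsInclusionHomotopyEquiv Y (Y ∪ R) := by
  classical
  have hpw : EqOn (R.piecewise r id) id Y := fun x hx => by
    by_cases hxR : x ∈ R
    · rw [piecewise_eq_of_mem _ _ _ hxR, hid ⟨hxR, hx⟩]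
    · rw [piecewise_eq_of_notMem _ _ _ hxR]
  refine of_segment_subset (r := R.piecewise r id) subset_union_left
    ((continuousOn_id.congr hpw).union_of_isClosed (hr.congr (piecewise_eqOn R r id)) hY hR)
    ?_ hpw fun x hx => ?_
  · rintro x (hx | hx)
    · exact mem_of_eq_of_mem (hpw hx) hx
    · exact mem_of_eq_of_mem (piecewise_eq_of_mem _ _ _ hx) (hmaps hx).2
  · by_cases hxR : x ∈ R
    · rw [piecewise_eq_of_mem _ _ _ hxR]
      exact (hconv.segment_subset hxR (hmaps hxR).1).trans subset_union_right
    · rw [piecewise_eq_of_notMem _ _ _ hxR, id, segment_same, singleton_subset_iff]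
      exact hx

theorem union_of_radial {F : Type*} [NormedAddCommGroup F] [NormedSpace ℝ F] (φ : E ≃ₜ F)
    (hY : IsClosed Y) (hR : IsClosed R) (hconv : Convex ℝ R) (hne : ∀ x ∈ R, φ x ≠ 0)
    (hle : ∀ x ∈ R, ‖φ x‖ ≤ 1)
    (hsmul : ∀ x ∈ R, ∀ a : ℝ, 1 ≤ a → ‖a • φ x‖ ≤ 1 → φ.symm (a • φ x) ∈ R)
    (hmem : ∀ x ∈ R, x ∈ Y ↔ ‖φ x‖ = 1) : IsInclusionHomotopyEquiv Y (Y ∪ R) := by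
  refine union_of_retraction (r := fun x => φ.symm (‖φ x‖⁻¹ • φ x)) hY hR hconv ?_ ?_ ?_
  · have hφ : ContinuousOn φ R := φ.continuous.continuousOn
    exact φ.symm.continuous.comp_continuousOn
      ((hφ.norm.inv₀ fun x hx => norm_ne_zero_iff.2 (hne x hx)).smul hφ)
  · intro x hx
    have hnorm : ‖‖φ x‖⁻¹ • φ x‖ = 1 := norm_smul_inv_norm (𝕜 := ℝ) (hne x hx)
    have hxR : φ.symm (‖φ x‖⁻¹ • φ x) ∈ R :=
      hsmul x hx _ ((one_le_inv₀ (norm_pos_iff.2 (hne x hx))).2 (hle x hx)) hnorm.le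
    refine ⟨hxR, (hmem _ hxR).2 ?_⟩
    rw [φ.apply_symm_apply, hnorm]
  · intro x ⟨hx, hxY⟩
    change φ.symm (‖φ x‖⁻¹ • φ x) = x
    rw [(hmem x hx).1 hxY, inv_one, one_smul, φ.symm_apply_apply]

end IsInclusionHomotopyEquiv

end InclusionHomotopyEquiv

section RadialCoordinate

/-- In the coordinate `φ`, the set `J` lies in `[-1, 1]`, can be pushed away from `0`, and meets
`{-1, 1}` exactly in the points of `B`. -/
structure IsRadialCoordinate (φ : ℝ ≃ₜ ℝ) (J B : Set ℝ) : Prop where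
  abs_le_one : ∀ t ∈ J, |φ t| ≤ 1
  symm_mul_mem : ∀ t ∈ J, ∀ a, 1 ≤ a → |a * φ t| ≤ 1 → φ.symm (a * φ t) ∈ J
  abs_eq_one_iff : ∀ t ∈ J, |φ t| = 1 ↔ t ∈ B

theorem IsRadialCoordinate.congr {φ : ℝ ≃ₜ ℝ} {J B B' : Set ℝ} (h : IsRadialCoordinate φ J B)
    (hB : ∀ t ∈ J, t ∈ B ↔ t ∈ B') : IsRadialCoordinate φ J B' where
  abs_le_one := h.abs_le_one
  symm_mul_mem := h.symm_mul_mem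
  abs_eq_one_iff t ht := (h.abs_eq_one_iff t ht).trans (hB t ht)

theorem isRadialCoordinate_singleton (p : ℝ) :
    IsRadialCoordinate (Homeomorph.subRight p) {p} ∅ where
  abs_le_one := by simp
  symm_mul_mem := by simp
  abs_eq_one_iff := by simp

theorem exists_homeomorph_uIcc {p q : ℝ} (hpq : p ≠ q) :
    ∃ φ : ℝ ≃ₜ ℝ, (∀ t, t ∈ uIcc p q ↔ |φ t| ≤ 1) ∧ φ p = 1 ∧ φ q = -1 := by
  have hw : (p - q) / 2 ≠ 0 := div_ne_zero (sub_ne_zero.2 hpq) two_ne_zero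
  refine ⟨(affineHomeomorph ((p - q) / 2) ((p + q) / 2) hw).symm, fun t => ?_, ?_, ?_⟩
  · rw [affineHomeomorph_symm_apply, abs_div, div_le_one (abs_pos.2 hw)]
    rcases le_total p q with h | h
    · rw [uIcc_of_le h, abs_of_nonpos (by linarith : (p - q) / 2 ≤ 0), abs_le, mem_Icc]
      constructor <;> rintro ⟨h, h'⟩ <;> constructor <;> linarith
    · rw [uIcc_of_ge h, abs_of_nonneg (by linarith : 0 ≤ (p - q) / 2), abs_le, mem_Icc]
      constructor <;> rintro ⟨h, h'⟩ <;> constructor <;> linarith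
  · rw [Homeomorph.symm_apply_eq, affineHomeomorph_apply]
    ring
  · rw [Homeomorph.symm_apply_eq, affineHomeomorph_apply]
    ring

theorem exists_isRadialCoordinate_pair {p q : ℝ} (hpq : p ≠ q) :
    ∃ φ, IsRadialCoordinate φ (uIcc p q) {p, q} := by
  obtain ⟨φ, hφ, hp, hq⟩ := exists_homeomorph_uIcc hpq
  refine ⟨φ, fun t ht => (hφ t).1 ht, fun t _ a _ ha => ?_, fun t _ => ?_⟩
  · rwa [hφ, φ.apply_symm_apply]
  · rw [abs_eq zero_le_one, ← hq, ← hp, φ.injective.eq_iff, φ.injective.eq_iff]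
    rfl

theorem exists_isRadialCoordinate_left {p q : ℝ} (hpq : p ≠ q) :
    ∃ φ, IsRadialCoordinate φ (uIcc p q) {p} ∧ ∀ t ∈ uIcc p q, φ t ≠ 0 := by
  obtain ⟨φ, hφ, hp, -⟩ := exists_homeomorph_uIcc hpq
  -- The projection starts from the point as far beyond `q` as `p` is on the other side.
  let ψ := φ.trans (affineHomeomorph (1 / 4) (3 / 4) (by norm_num))
  have hψ (t : ℝ) : ψ t = 1 / 4 * φ t + 3 / 4 := rfl
  have hmem (t : ℝ) : t ∈ uIcc p q ↔ 1 / 2 ≤ ψ t ∧ ψ t ≤ 1 := by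
    rw [hφ, hψ, abs_le]
    constructor <;> rintro ⟨h, h'⟩ <;> constructor <;> linarith
  refine ⟨ψ, ⟨fun t ht => ?_, fun t ht a ha hle => ?_, fun t ht => ?_⟩, fun t ht => ?_⟩ <;>
    obtain ⟨hlo, hhi⟩ := (hmem t).1 ht
  · exact abs_le.2 ⟨by linarith, hhi⟩
  · rw [hmem, ψ.apply_symm_apply]
    exact ⟨by nlinarith, (le_abs_self _).trans hle⟩
  · have hψp : ψ p = 1 := by
      rw [hψ, hp]
      norm_num
    rw [abs_of_nonneg (by linarith), ← hψp, ψ.injective.eq_iff, mem_singleton_iff]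
  · linarith

end RadialCoordinate

namespace Grid

variable (g : Grid)

theorem setOf_isFace_even (j : ℤ) : {t | IsFace (g.index t) (2 * j)} = {g.node j} := by
  ext t
  rw [mem_singleton_iff, ← index_eq_two_mul_iff, mem_ofPred_eq, IsFace]
  omega

theorem setOf_isFace_odd (j : ℤ) :
    {t | IsFace (g.index t) (2 * j + 1)} = uIcc (g.node j) (g.node (j + 1)) := by
  ext t
  rw [uIcc_of_le (g.strictMono (Int.lt_succ j)).le, mem_Icc, ← two_mul_le_index_iff,
    ← index_le_two_mul_iff, mem_ofPred_eq, IsFace]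
  omega

theorem exists_isRadialCoordinate {m m' : ℤ} (h : IsFace m m') :
    ∃ φ, IsRadialCoordinate φ {t | IsFace (g.index t) m'} {t | ¬ IsFace m (g.index t)} ∧
      (m ≠ m' → ∀ t, IsFace (g.index t) m' → φ t ≠ 0) := by
  obtain ⟨j, rfl | rfl⟩ := m'.even_or_odd'
  · obtain rfl : m = 2 * j := by
      simp only [IsFace] at h
      omega
    refine ⟨Homeomorph.subRight (g.node j), ?_, fun hne => absurd rfl hne⟩
    rw [setOf_isFace_even]
    refine (isRadialCoordinate_singleton _).congr fun t ht => ?_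
    rw [mem_ofPred_eq, index_eq_two_mul_iff.2 ht]
    exact iff_of_false id (not_not.2 (Or.inl rfl))
  have hne : g.node j ≠ g.node (j + 1) := (g.strictMono (Int.lt_succ j)).ne
  have hJ := g.setOf_isFace_odd j
  have hface {t : ℝ} (ht : t ∈ uIcc (g.node j) (g.node (j + 1))) :
      IsFace (g.index t) (2 * j + 1) := hJ.ge ht
  obtain rfl | rfl | rfl : m = 2 * j + 1 ∨ m = 2 * j ∨ m = 2 * (j + 1) := by
    simp only [IsFace] at h
    omega
  · obtain ⟨φ, hφ⟩ := exists_isRadialCoordinate_pair hne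
    refine ⟨φ, hJ ▸ hφ.congr fun t ht => ?_, fun hne => absurd rfl hne⟩
    have := hface ht
    rw [mem_insert_iff, mem_singleton_iff, ← index_eq_two_mul_iff, ← index_eq_two_mul_iff]
    simp only [IsFace, mem_ofPred_eq] at *
    omega
  · obtain ⟨φ, hφ, hzero⟩ := exists_isRadialCoordinate_left hne.symm
    rw [uIcc_comm] at hφ hzero
    refine ⟨φ, hJ ▸ hφ.congr fun t ht => ?_, fun _ t ht => hzero t (hJ.le ht)⟩
    have := hface ht
    rw [mem_singleton_iff, ← index_eq_two_mul_iff]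
    simp only [IsFace, mem_ofPred_eq] at *
    omega
  · obtain ⟨φ, hφ, hzero⟩ := exists_isRadialCoordinate_left hne
    refine ⟨φ, hJ ▸ hφ.congr fun t ht => ?_, fun _ t ht => hzero t (hJ.le ht)⟩
    have := hface ht
    rw [mem_singleton_iff, ← index_eq_two_mul_iff]
    simp only [IsFace, mem_ofPred_eq] at *
    omega

variable {ι : Type*} [Finite ι] {K : Set (Cell ι)} {e f : Cell ι}

theorem isInclusionHomotopyEquiv_sdiff_Ici (hK : IsLowerSet K) (hf : f ∈ K) (hef : e < f)
    (hfree : ∀ c ∈ K, e ≤ c → c ≤ f) :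
    IsInclusionHomotopyEquiv (g.region (K \ Ici e)) (g.region K) := by
  have := Fintype.ofFinite ι
  obtain ⟨k, hk⟩ : ∃ k, e k ≠ f k := by
    by_contra! heq
    exact hef.ne (Cell.ext (funext heq))
  choose φ hφ hφ_ne using fun i => g.exists_isRadialCoordinate (hef.le i)
  have hunion : g.region K = g.region (K \ Ici e) ∪ g.region (Iic f) := by
    ext x
    refine ⟨fun hx => ?_, fun hx => hx.elim And.left fun h => hK h hf⟩
    by_cases hex : e ≤ g.cellOf x
    · exact Or.inr (hfree _ hx hex)
    · exact Or.inl ⟨hx, hex⟩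
  rw [hunion]
  refine .union_of_radial (Homeomorph.piCongrRight φ)
    (g.isClosed_region (hK.sdiff_of_isUpperSet (isUpperSet_Ici e)))
    (g.isClosed_region (isLowerSet_Iic f)) (g.convex_region_Iic f) (fun x hx h => ?_)
    (fun x hx => ?_) (fun x hx a ha hle i => ?_) fun x hx => ?_
  · exact hφ_ne k hk (x k) (hx k) (congrFun h k)
  · exact (pi_norm_le_iff_of_nonneg zero_le_one).2 fun i => (hφ i).abs_le_one _ (hx i)
  · exact (hφ i).symm_mul_mem _ (hx i) a ha ((norm_le_pi_norm _ i).trans hle)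
  · have habs (i : ι) := (hφ i).abs_le_one _ (hx i)
    have hnorm : ‖Homeomorph.piCongrRight φ x‖ ≤ 1 := (pi_norm_le_iff_of_nonneg zero_le_one).2 habs
    have hlt : ‖Homeomorph.piCongrRight φ x‖ < 1 ↔ e ≤ g.cellOf x := by
      rw [pi_norm_lt_iff zero_lt_one, le_def]
      refine forall_congr' fun i => (habs i).lt_iff_ne.trans ?_
      exact ((hφ i).abs_eq_one_iff _ (hx i)).not.trans not_not
    rw [← not_iff_not, ← ne_eq, ← hnorm.lt_iff_ne, hlt]
    exact ⟨fun h => not_not.1 fun hex => h ⟨hK hx hf, hex⟩, fun h h' => h'.2 h⟩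

theorem isInclusionHomotopyEquiv_of_acyclic {K L : Set (Cell (Fin 2))} (hK : IsLowerSet K)
    (hL : IsLowerSet L) (hLK : L ⊆ K) (hfin : (K \ L).Finite) (hac : Acyclic (K \ L)) :
    IsInclusionHomotopyEquiv (g.region L) (g.region K) := by
  induction hn : (K \ L).ncard using Nat.strong_induction_on generalizing K with
  | _ n ih =>
  obtain hempty | hne := (K \ L).eq_empty_or_nonempty
  · rw [hLK.antisymm (sdiff_eq_empty.1 hempty)]
    exact .refl _
  obtain ⟨e, f, hef⟩ := hac.exists_freePair hfin hne
  have heL {c : Cell (Fin 2)} (hec : e ≤ c) : c ∉ L := fun hc => hef.left_mem.2 (hL hec hc)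
  have hcases {c : Cell (Fin 2)} (hc : c ∈ K) (hec : e ≤ c) : c = e ∨ c = f :=
    hef.eq_or_eq c ⟨hc, heL hec⟩ hec
  have hlt : e < f :=
    (le_of_mem_cofacets hef.isCofacet).lt_of_ne (ne_of_mem_cofacets hef.isCofacet).symm
  have hsdiff : (K \ Ici e) \ L = (K \ L) \ {e, f} := by
    ext c
    refine ⟨fun h => ⟨⟨h.1.1, h.2⟩, ?_⟩, fun h => ⟨⟨h.1.1, fun hec => h.2 ?_⟩, h.1.2⟩⟩
    · rintro (rfl | rfl)
      exacts [h.1.2 self_mem_Ici, h.1.2 hlt.le]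
    · exact hcases h.1.1 hec
  have hoc : (K \ L).OrdConnected := hK.ordConnected.inter hL.compl.ordConnected
  refine .trans (ih _ ?_ (hK.sdiff_of_isUpperSet (isUpperSet_Ici e)) ?_ ?_ ?_ rfl)
    (g.isInclusionHomotopyEquiv_sdiff_Ici hK hef.right_mem.1 hlt fun c hc hec => ?_)
  · rw [hsdiff, ← hn]
    exact ncard_lt_ncard (sdiff_subset.ssubset_of_mem_notMem hef.left_mem fun h => h.2 (.inl rfl))
      hfin
  · exact fun c hc => ⟨hLK hc, fun hec => heL hec hc⟩
  · exact hsdiff ▸ hfin.sdiff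
  · exact hsdiff ▸ hef.acyclic_sdiff hoc hac
  · exact (hcases hc hec).elim (fun h => h ▸ hlt.le) le_of_eq

end Grid

namespace Grid

theorem isInclusionHomotopyEquiv_inter_union (g : Grid) {A B : Set (Cell (Fin 2))}
    (hA : IsPureComplex A) (hB : IsPureComplex B) (hAB : Transverse A B)
    (h : RegularPair (g.region A) (g.region B)) (h' : RegularPair (g.region B) (g.region A)) :
    IsInclusionHomotopyEquiv (g.region A ∩ g.region B) (g.region A ∪ g.region B) :=
  g.isInclusionHomotopyEquiv_of_acyclic (hA.isLowerSet.union hB.isLowerSet)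
    (hA.isLowerSet.inter hB.isLowerSet) (inter_subset_left.trans subset_union_left)
    (hA.finite.union hB.finite).sdiff <|
      (g.cellRegular_of_regularPair hA hB hAB h).acyclic_union_sdiff_inter
        (g.cellRegular_of_regularPair hB hA hAB.symm h') hA hB hAB

end Grid

section Box

variable {κ ι : Type*} {P Q : Set κ} {l u l' u' : κ → ι → ℤ}

/-- The cells of the union over `p ∈ P` of the closed boxes whose opposite corners have the nodes
`l p i` and `u p i` as coordinates. -/
def boxes (P : Set κ) (l u : κ → ι → ℤ) : Set (Cell ι) :=
  {c | ∃ p ∈ P, ∀ i, c i ∈ Icc (2 * l p i) (2 * u p i)}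

theorem isPureComplex_boxes [Finite ι] (hP : P.Finite) (hlu : ∀ p ∈ P, ∀ i, l p i < u p i) :
    IsPureComplex (boxes P l u) where
  isLowerSet := by
    rintro c d hdc ⟨p, hp, hc⟩
    refine ⟨p, hp, fun i => ?_⟩
    have := hc i
    have := le_def.1 hdc i
    simp only [IsFace, mem_Icc] at *
    omega
  finite := by
    refine (hP.biUnion fun p _ => (Set.Finite.pi' fun i =>
      finite_Icc (2 * l p i) (2 * u p i)).preimage coord_injective.injOn).subset ?_
    rintro c ⟨p, hp, hc⟩
    exact mem_biUnion hp hc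
  exists_ge := by
    rintro c ⟨p, hp, hc⟩
    have hodd (i : ι) : ∃ m ∈ Icc (2 * l p i) (2 * u p i), IsFace (c i) m ∧ m % 2 = 1 := by
      have := hlu p hp i
      obtain ⟨hl, hu⟩ := hc i
      by_cases hlt : c i < 2 * u p i
      · exact ⟨2 * (c i / 2) + 1, ⟨by omega, by omega⟩, by rw [IsFace]; omega, by omega⟩
      · exact ⟨c i - 1, ⟨by omega, by omega⟩, by rw [IsFace]; omega, by omega⟩
    choose f hf hcf hfodd using hodd
    exact ⟨⟨f⟩, ⟨p, hp, hf⟩, hcf, hfodd⟩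

theorem notWall_boxes [DecidableEq ι] {i : ι} {m : ℤ}
    (hm : ∀ p ∈ P, m ≠ 2 * l p i ∧ m ≠ 2 * u p i) : NotWall (boxes P l u) i m := by
  intro c hc m' hmm'
  refine exists_congr fun p => and_congr_right fun hp => forall_congr' fun k => ?_
  obtain rfl | hk := eq_or_ne k i
  · have := hm p hp
    rw [update_self, hc]
    simp only [IsFace, mem_Icc] at *
    omega
  · rw [update_of_ne hk]

theorem transverse_boxes [DecidableEq ι] (h : ∀ p ∈ P, ∀ q ∈ Q, ∀ i,
    Disjoint {l p i, u p i} ({l' q i, u' q i} : Set ℤ)) :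
    Transverse (boxes P l u) (boxes Q l' u') := by
  intro i m
  by_cases hm : ∀ p ∈ P, m ≠ 2 * l p i ∧ m ≠ 2 * u p i
  · exact .inl (notWall_boxes hm)
  · refine .inr (notWall_boxes fun q hq => ?_)
    push Not at hm
    obtain ⟨p, hp, hm⟩ := hm
    have := h p hp q hq i
    simp only [disjoint_insert_left, disjoint_singleton_left, mem_insert_iff,
      mem_singleton_iff] at this
    omega

theorem Grid.region_boxes (g : Grid) : g.region (boxes P l u) =
    ⋃ p ∈ P, Icc (fun i => g.node (l p i)) (fun i => g.node (u p i)) := by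
  ext x
  simp only [mem_iUnion₂, exists_prop, mem_Icc, Pi.le_def, ← forall_and,
    ← Grid.two_mul_le_index_iff, ← Grid.index_le_two_mul_iff]
  rfl

end Box

section Thickening

theorem thick_iUnion₂ {α : Type*} (r : ℝ) (P : Set α) (F : α → Set Plane) :
    thick r (⋃ p ∈ P, F p) = ⋃ p ∈ P, thick r (F p) := by
  ext y
  simp only [thick, mem_iUnion₂, mem_ofPred_eq, exists_prop]
  tauto

theorem thick_Icc {r : ℝ} {a b : Plane} (hr : 0 ≤ r) (hab : a ≤ b) :
    thick r (Icc a b) = Icc (fun i => a i - r) (fun i => b i + r) := by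
  ext y
  simp only [thick, mem_ofPred_eq, pi_norm_le_iff_of_nonneg hr, Pi.sub_apply, Real.norm_eq_abs,
    abs_le]
  constructor
  · rintro ⟨x, ⟨ha, hb⟩, hxy⟩
    exact ⟨fun i => by linarith [ha i, hxy i], fun i => by linarith [hb i, hxy i]⟩
  · rintro ⟨ha, hb⟩
    refine ⟨a ⊔ (b ⊓ y), ⟨le_sup_left, sup_le hab inf_le_left⟩, fun i => ?_⟩
    have hlow : y i - r ≤ (a ⊔ (b ⊓ y)) i :=
      le_sup_of_le_right (le_inf (sub_le_iff_le_add.2 (hb i)) (sub_le_self _ hr))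
    have hupp : (a ⊔ (b ⊓ y)) i ≤ y i + r :=
      sup_le (sub_le_iff_le_add.1 (ha i)) (inf_le_of_right_le (le_add_of_nonneg_right hr))
    constructor <;> linarith

/-- The upper corner of the pixel `p`, as an integer point. -/
def pixelCorner (p : ℕ × ℕ) : Fin 2 → ℤ := ![p.1, p.2]

theorem pixel_eq_Icc (p : ℕ × ℕ) :
    pixel p = Icc (fun i => (pixelCorner p i : ℝ) - 1) (fun i => (pixelCorner p i : ℝ)) := by
  ext x
  simp only [pixel, pixelCorner, mem_Icc, Pi.le_def, Fin.forall_fin_two, mem_ofPred_eq,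
    Matrix.cons_val_zero, Matrix.cons_val_one, Int.cast_natCast]
  tauto

theorem thick_fg {r : ℝ} (hr : 0 ≤ r) (S : Set (ℕ × ℕ)) : thick r (fg S) =
    ⋃ p ∈ S, Icc (fun i => (pixelCorner p i : ℝ) - 1 - r) (fun i => pixelCorner p i + r) := by
  rw [fg, thick_iUnion₂]
  refine iUnion₂_congr fun p _ => ?_
  rw [pixel_eq_Icc, thick_Icc hr fun i => sub_le_self _ zero_le_one]

end Thickening

section OffsetGrid

variable {ε δ : ℝ}

/-- The nodes `q - δ`, `q - ε`, `q + ε` and `q + δ` around every integer `q`, numbered from `4 * q`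
to `4 * q + 3`. -/
def offsetNode (ε δ : ℝ) (m : ℤ) : ℝ :=
  (m / 4 : ℤ) + ![-δ, -ε, ε, δ] (Int.divModEquiv 4 m).2

theorem offsetNode_four_mul_add (q : ℤ) (k : Fin 4) :
    offsetNode ε δ (4 * q + (k : ℕ)) = q + ![-δ, -ε, ε, δ] k := by
  have hk : Int.divModEquiv 4 (4 * q + (k : ℕ)) = (q, k) := by
    rw [← Equiv.eq_symm_apply]
    simp [Int.divModEquiv, mul_comm, add_comm]
  have : (4 * q + (k : ℕ)) / 4 = q := by omega
  rw [offsetNode, hk, this]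

@[simp]
theorem offsetNode_four_mul (q : ℤ) : offsetNode ε δ (4 * q) = q - δ := by
  simpa [sub_eq_add_neg] using offsetNode_four_mul_add q 0

@[simp]
theorem offsetNode_four_mul_add_one (q : ℤ) : offsetNode ε δ (4 * q + 1) = q - ε :=
  offsetNode_four_mul_add q 1

@[simp]
theorem offsetNode_four_mul_add_two (q : ℤ) : offsetNode ε δ (4 * q + 2) = q + ε :=
  offsetNode_four_mul_add q 2

@[simp]
theorem offsetNode_four_mul_add_three (q : ℤ) : offsetNode ε δ (4 * q + 3) = q + δ :=
  offsetNode_four_mul_add q 3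

theorem strictMono_offsetNode (hε : 0 < ε) (hεδ : ε < δ) (hδ : δ < 1 / 2) :
    StrictMono (offsetNode ε δ) := strictMono_int_of_lt_succ fun m => by
  obtain ⟨q, rfl | rfl | rfl | rfl⟩ :
      ∃ q, m = 4 * q ∨ m = 4 * q + 1 ∨ m = 4 * q + 2 ∨ m = 4 * q + 3 := ⟨m / 4, by omega⟩
  · rw [offsetNode_four_mul, offsetNode_four_mul_add_one]
    linarith
  · rw [offsetNode_four_mul_add_one, add_assoc, one_add_one_eq_two, offsetNode_four_mul_add_two]
    linarith
  · rw [offsetNode_four_mul_add_two, add_assoc, two_add_one_eq_three,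
      offsetNode_four_mul_add_three]
    linarith
  · rw [offsetNode_four_mul_add_three, (by ring : 4 * q + 3 + 1 = 4 * (q + 1)),
      offsetNode_four_mul, Int.cast_add, Int.cast_one]
    linarith

/-- The grid with the nodes `offsetNode ε δ`. -/
def offsetGrid (hε : 0 < ε) (hεδ : ε < δ) (hδ : δ < 1 / 2) : Grid where
  node := offsetNode ε δ
  strictMono := strictMono_offsetNode hε hεδ hδ
  exists_mem_Ico t := by
    have hlow : offsetNode ε δ (4 * ⌊t⌋) ≤ t := by
      rw [offsetNode_four_mul]
      linarith [Int.floor_le t]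
    have hupp : t < offsetNode ε δ (4 * (⌊t⌋ + 1) + 3) := by
      rw [offsetNode_four_mul_add_three, Int.cast_add, Int.cast_one]
      linarith [Int.lt_floor_add_one t]
    obtain ⟨i, hi, hmax⟩ := Int.exists_greatest_of_bdd (P := fun i => offsetNode ε δ i ≤ t)
      ⟨_, fun i hi => ((strictMono_offsetNode hε hεδ hδ).lt_iff_lt.1 (hi.trans_lt hupp)).le⟩
      ⟨_, hlow⟩
    exact ⟨i, hi, not_le.1 fun h => (hmax _ h).not_gt (Int.lt_succ i)⟩

variable (hε : 0 < ε) (hεδ : ε < δ) (hδ : δ < 1 / 2)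

theorem offsetGrid_region_boxes_inner (S : Set (ℕ × ℕ)) :
    (offsetGrid hε hεδ hδ).region (boxes S (fun p i => 4 * (pixelCorner p i - 1) + 1)
      fun p i => 4 * pixelCorner p i + 2) = thick ε (fg S) := by
  simp [thick_fg hε.le, Grid.region_boxes, offsetGrid]

theorem offsetGrid_region_boxes_outer (S : Set (ℕ × ℕ)) :
    (offsetGrid hε hεδ hδ).region (boxes S (fun p i => 4 * (pixelCorner p i - 1))
      fun p i => 4 * pixelCorner p i + 3) = thick δ (fg S) := by
  simp [thick_fg (hε.trans hεδ).le, Grid.region_boxes, offsetGrid]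

end OffsetGrid

theorem ZeroLoss.regularPair_left {P G : Set (ℕ × ℕ)} {ε : ℝ} (h : ZeroLoss P G ε) :
    RegularPair (thick ε (fg P)) (thick (2 * ε) (fg G)) :=
  h.1

theorem ZeroLoss.regularPair_right {P G : Set (ℕ × ℕ)} {ε : ℝ} (h : ZeroLoss P G ε) :
    RegularPair (thick (2 * ε) (fg G)) (thick ε (fg P)) := by
  simpa only [RegularPair, RegularComp, FNset, TPset, TNset, sdiff_eq, inter_comm] using h.2

theorem OnGrid.finite {S : Set (ℕ × ℕ)} {h w : ℕ} (hS : OnGrid S h w) : S.Finite :=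
  ((finite_Icc 1 h).prod (finite_Icc 1 w)).subset hS

theorem zero_loss_inclusion_homotopyEquiv_general {P G : Set (ℕ × ℕ)} (hP : P.Finite)
    (hG : G.Finite) {ε δ : ℝ} (hε : ε ∈ Ioo 0 (1 / 2)) (hδ : δ ∈ Ioo 0 (1 / 2)) (hne : ε ≠ δ)
    (hFP : RegularPair (thick ε (fg P)) (thick δ (fg G)))
    (hFN : RegularPair (thick δ (fg G)) (thick ε (fg P))) :
    IsInclusionHomotopyEquiv (thick ε (fg P) ∩ thick δ (fg G))
      (thick ε (fg P) ∪ thick δ (fg G)) := by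
  wlog hεδ : ε < δ generalizing P G ε δ
  · rw [inter_comm, union_comm]
    exact this hG hP hδ hε hne.symm hFN hFP (hne.lt_or_gt.resolve_left hεδ)
  rw [← offsetGrid_region_boxes_inner hε.1 hεδ hδ.2,
    ← offsetGrid_region_boxes_outer hε.1 hεδ hδ.2] at *
  have hdisj (a b : ℤ) :
      Disjoint {4 * (a - 1) + 1, 4 * a + 2} ({4 * (b - 1), 4 * b + 3} : Set ℤ) := by
    simp only [disjoint_insert_left, disjoint_singleton_left, mem_insert_iff, mem_singleton_iff]
    omega
  exact Grid.isInclusionHomotopyEquiv_inter_union _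
    (isPureComplex_boxes hP fun p _ i => by omega) (isPureComplex_boxes hG fun p _ i => by omega)
    (transverse_boxes fun p _ q _ i => hdisj (pixelCorner p i) (pixelCorner q i)) hFP hFN

/-- Under the zero-loss hypothesis, the inclusion of the intersection of the
thickened foregrounds into their union is a homotopy equivalence. -/
theorem zero_loss_inclusion_homotopyEquiv
    (h w : ℕ) (P G : Set (ℕ × ℕ)) (hP : OnGrid P h w) (hG : OnGrid G h w)
    (ε : ℝ) (hε0 : 0 < ε) (hε : ε < 1 / 4) (hzero : ZeroLoss P G ε) :
    ∃ E : ContinuousMap.HomotopyEquiv ↥(TPset P G ε)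
        ↥(thick ε (fg P) ∪ thick (2 * ε) (fg G)),
      ∀ x : ↥(TPset P G ε), ((E.toFun x : Plane)) = (x : Plane) := by
  exact zero_loss_inclusion_homotopyEquiv_general hP.finite hG.finite
    ⟨hε0, by linarith⟩ ⟨by linarith, by linarith⟩ (by linarith)
    hzero.regularPair_left hzero.regularPair_right

end
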